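/- arXiv:1311.3728 — 8 statements merged into one kernel-verified Lean document; each statement's English description precedes it below -/
import Mathlib

section
/- Let C be a monotone CNF formula all of whose clauses are nonempty, and let x be a variable occurring in exactly the clauses c_1,…,c_d with d ≥ 1 and w_j = |c_j| − 1 ≥ 1 for every j. Suppose every clause of every sub-instance C_{j,i} is nonempty. Then R(C,x) = ∏_{j=1}^{d} ( 1 − ∏_{i=1}^{w_j} R(C_{j,i}, x_{j,i}) / (1 + R(C_{j,i}, x_{j,i})) ). -/
open Finset

variable {V : Type*} [Fintype V] [DecidableEq V]

/-- An assignment `σ` satisfies a monotone CNF formula (a finite collection of clauses,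
each clause a finite set of variables) if every clause contains a variable set to `true`. -/
def CnfSat (C : List (Finset V)) (σ : V → Bool) : Prop :=
  ∀ c ∈ C, ∃ v ∈ c, σ v = true

/-- The number of satisfying assignments giving variable `x` the value `b`. -/
noncomputable def NSat (C : List (Finset V)) (x : V) (b : Bool) : ℕ :=
  Nat.card {σ : V → Bool // CnfSat C σ ∧ σ x = b}

/-- The marginal ratio `R(C,x) = P_C(x=0)/P_C(x=1)`. -/
noncomputable def Rcnf (C : List (Finset V)) (x : V) : ℝ :=
  (NSat C x false : ℝ) / (NSat C x true : ℝ)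

/-- The sub-instance `C_{j,i}`: starting from `C`, the clauses `c_1,…,c_{j-1}` (those
before position `j` among the clauses containing `x`) and the clause `c_j` are deleted,
each clause `c_k` with `k > j` is replaced by `c_k ∖ {x}`, and the variables
`x_{j,1},…,x_{j,i-1}` (here `X b` for `b < i`) are pinned to `0`, i.e. removed from every
clause.  (Only the set of clauses matters for satisfaction.) -/
def CnfSub (C : List (Finset V)) (x : V) {d : ℕ} (c : Fin d → Finset V)
    {m : ℕ} (X : Fin m → V) (j : Fin d) (i : Fin m) : List (Finset V) :=
  (C.filter (fun cl => decide (x ∉ cl)) ++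
      ((List.ofFn c).drop (j.1 + 1)).map (fun cl => cl.erase x)).map
    (fun cl => cl \ (Finset.univ.filter (fun b => b < i)).image X)

/-!
Let `F_k` consist of the clauses of `C` without `x` and of `c_{k+1} ∖ {x}, …, c_d ∖ {x}`. Setting
`x = 0` turns `C` into `F_0`, setting `x = 1` turns it into `F_d`, so `R(C,x)` is the ratio of the
numbers of models of `F_0` and `F_d`. Adding the clause `c_j ∖ {x}` to `F_j` multiplies the number
of models by the probability under `F_j` that the clause holds, and by the chain rule the
complementary probability is the product over `i` of the probabilities that `x_{j,i} = 0` given that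
`x_{j,1}, …, x_{j,i-1}` are `0`. Such a condition amounts to pinning those variables, and
`P(y = 0) = R/(1 + R)`.
-/

section Counting

theorem prod_mul_eq_apply_last {M : Type*} [CommMonoid M] {n : ℕ} (f : Fin (n + 1) → M)
    (g : Fin n → M) (h : ∀ i, g i * f i.castSucc = f i.succ) :
    (∏ i, g i) * f 0 = f (Fin.last n) := by
  induction n with
  | zero => simp
  | succ n ih =>
    rw [Fin.prod_univ_castSucc, mul_right_comm, mul_comm, ← Fin.succ_last, ← h (Fin.last n)]
    exact congrArg _ (ih (fun k => f k.castSucc) (fun i => g i.castSucc) fun i => h i.castSucc)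

theorem prod_mul_eq_apply_zero {M : Type*} [CommMonoid M] {n : ℕ} (f : Fin (n + 1) → M)
    (g : Fin n → M) (h : ∀ i, g i * f i.succ = f i.castSucc) :
    (∏ i, g i) * f (Fin.last n) = f 0 := by
  have hrev := prod_mul_eq_apply_last (fun k => f k.rev) (fun i => g i.rev) fun i => by
    simpa only [Fin.rev_castSucc, Fin.rev_succ] using h i.rev
  rwa [Fin.rev_zero, Fin.rev_last, show ∏ i : Fin n, g i.rev = ∏ i, g i from
    Equiv.prod_comp Fin.revPerm g] at hrev

theorem natCard_and_add_natCard_and_not {α : Type*} [Finite α] (p q : α → Prop) :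
    Nat.card {a // p a ∧ q a} + Nat.card {a // p a ∧ ¬ q a} = Nat.card {a // p a} :=
  Set.ncard_inter_add_ncard_sdiff_eq_ncard {a | p a} {a | q a}

theorem natCard_piecewise {ι β : Type*} [DecidableEq ι] (p : (ι → β) → Prop) (S : Finset ι)
    (τ : ι → β) :
    Nat.card {σ : ι → β // p (S.piecewise τ σ)} =
      Nat.card β ^ #S * Nat.card {σ : ι → β // p σ ∧ ∀ i ∈ S, σ i = τ i} := by
  let e : {σ : ι → β // p (S.piecewise τ σ)} ≃
      (S → β) × {σ : ι → β // p σ ∧ ∀ i ∈ S, σ i = τ i} :=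
    { toFun σ := (fun i => σ.1 i, ⟨S.piecewise τ σ.1, σ.2, fun i hi => by simp [hi]⟩)
      invFun t := ⟨fun i => if hi : i ∈ S then t.1 ⟨i, hi⟩ else t.2.1 i, by
        convert t.2.2.1 using 1
        ext i
        by_cases hi : i ∈ S <;> simp [hi, t.2.2.2 i]⟩
      left_inv σ := by
        ext i
        by_cases hi : i ∈ S <;> simp [hi]
      right_inv t := by
        refine Prod.ext (funext fun i => by simp) (Subtype.ext (funext fun i => ?_))
        by_cases hi : i ∈ S <;> simp [hi, t.2.2.2 i] }
  rw [Nat.card_congr e, Nat.card_prod, Nat.card_fun, Nat.card_eq_fintype_card (α := S),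
    Fintype.card_coe]

end Counting

section Models

omit [Fintype V] [DecidableEq V]

/-- The number of satisfying assignments of `C` that vanish on `S`; for `S = ∅`, the number of all
satisfying assignments of `C`. -/
noncomputable def zeroCount (C : List (Finset V)) (S : Finset V) : ℕ :=
  Nat.card {σ : V → Bool // CnfSat C σ ∧ ∀ v ∈ S, σ v = false}

/-- The probability `P_C(x = 0)` under the uniform distribution on satisfying assignments, written
in terms of the ratio `R(C,x)`. It is meaningful only when `P_C(x = 1) ≠ 0`. -/
noncomputable def zeroProb (C : List (Finset V)) (x : V) : ℝ :=
  Rcnf C x / (1 + Rcnf C x)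

theorem zeroCount_congr {C D : List (Finset V)} (h : ∀ cl, cl ∈ C ↔ cl ∈ D) (S : Finset V) :
    zeroCount C S = zeroCount D S := by
  simp only [zeroCount, CnfSat, h]

theorem zeroCount_singleton (C : List (Finset V)) (x : V) : zeroCount C {x} = NSat C x false := by
  simp only [zeroCount, NSat, mem_singleton, forall_eq]

theorem nSat_false_add_nSat_true [Finite V] (C : List (Finset V)) (x : V) :
    NSat C x false + NSat C x true = zeroCount C ∅ := by
  simpa [zeroCount, NSat] using
    natCard_and_add_natCard_and_not (CnfSat C) fun σ : V → Bool => σ x = false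

theorem nSat_true_pos [Finite V] {C : List (Finset V)} (hC : ∀ cl ∈ C, cl.Nonempty) (x : V) :
    0 < NSat C x true :=
  have : Nonempty {σ : V → Bool // CnfSat C σ ∧ σ x = true} :=
    ⟨fun _ => true, fun cl hcl => (hC cl hcl).imp fun _ hv => ⟨hv, rfl⟩, rfl⟩
  Nat.card_pos

theorem zeroProb_mul_zeroCount [Finite V] {C : List (Finset V)} (hC : ∀ cl ∈ C, cl.Nonempty)
    (x : V) : zeroProb C x * zeroCount C ∅ = zeroCount C {x} := by
  have htrue : (0 : ℝ) < NSat C x true := by exact_mod_cast nSat_true_pos hC x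
  rw [zeroCount_singleton, ← nSat_false_add_nSat_true C x, zeroProb, Rcnf]
  push_cast
  field_simp
  ring

theorem zeroCount_cons_add_zeroCount [Finite V] (a : Finset V) (C : List (Finset V)) :
    zeroCount (a :: C) ∅ + zeroCount C a = zeroCount C ∅ := by
  have hcons (σ : V → Bool) : CnfSat (a :: C) σ ↔ CnfSat C σ ∧ ∃ v ∈ a, σ v = true :=
    List.forall_mem_cons.trans and_comm
  simpa [zeroCount, hcons] using
    natCard_and_add_natCard_and_not (CnfSat C) fun σ : V → Bool => ∃ v ∈ a, σ v = true

end Models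

section Pinning

omit [Fintype V]

/-- The formula obtained from `C` by pinning the variables in `S` to `0`. They remain elements of
the variable type `V`, as unconstrained variables. -/
def pinZero (C : List (Finset V)) (S : Finset V) : List (Finset V) :=
  C.map (· \ S)

theorem cnfSat_pinZero_iff {C : List (Finset V)} {S : Finset V} {σ : V → Bool} :
    CnfSat (pinZero C S) σ ↔ CnfSat C (S.piecewise (fun _ => false) σ) := by
  simp only [CnfSat, pinZero, List.forall_mem_map]
  refine forall₂_congr fun c _ => exists_congr fun v => ?_
  by_cases hv : v ∈ S <;> simp [hv]

theorem cnfSat_filter_notMem_iff {C : List (Finset V)} {x : V} {σ : V → Bool} :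
    CnfSat (C.filter (fun cl => decide (x ∉ cl))) σ ↔
      CnfSat C (({x} : Finset V).piecewise (fun _ => true) σ) := by
  simp only [CnfSat, List.mem_filter, decide_eq_true_eq, and_imp]
  refine forall₂_congr fun c _ => ⟨fun h => ?_, fun h hx => ?_⟩
  · by_cases hx : x ∈ c
    · exact ⟨x, hx, by simp⟩
    · obtain ⟨v, hv, hσ⟩ := h hx
      exact ⟨v, hv, by simp [ne_of_mem_of_not_mem hv hx, hσ]⟩
  · obtain ⟨v, hv, hσ⟩ := h
    exact ⟨v, hv, by simpa [ne_of_mem_of_not_mem hv hx] using hσ⟩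

theorem zeroCount_pinZero (C : List (Finset V)) {S T : Finset V} (hST : Disjoint S T) :
    zeroCount (pinZero C S) T = 2 ^ #S * zeroCount C (S ∪ T) := by
  have hpin (σ : V → Bool) : (CnfSat (pinZero C S) σ ∧ ∀ v ∈ T, σ v = false) ↔
      CnfSat C (S.piecewise (fun _ => false) σ) ∧
        ∀ v ∈ T, S.piecewise (fun _ => false) σ v = false :=
    and_congr cnfSat_pinZero_iff <| forall₂_congr fun v hv => by
      rw [piecewise_eq_of_notMem _ _ _ (disjoint_right.1 hST hv)]
  have hunion (σ : V → Bool) : (CnfSat C σ ∧ ∀ v ∈ S ∪ T, σ v = false) ↔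
      (CnfSat C σ ∧ ∀ v ∈ T, σ v = false) ∧ ∀ v ∈ S, σ v = false := by
    rw [forall_mem_union, and_right_comm, and_assoc]
  simp only [zeroCount, hpin, hunion]
  rw [natCard_piecewise (fun σ => CnfSat C σ ∧ ∀ v ∈ T, σ v = false),
    Nat.card_eq_fintype_card, Fintype.card_bool]

theorem zeroCount_filter_notMem (C : List (Finset V)) (x : V) :
    zeroCount (C.filter (fun cl => decide (x ∉ cl))) ∅ = 2 * NSat C x true := by
  have hcount := natCard_piecewise (CnfSat C) {x} fun _ => true
  simpa only [zeroCount, NSat, cnfSat_filter_notMem_iff, Nat.card_eq_fintype_card (α := Bool),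
    Fintype.card_bool, card_singleton, pow_one, mem_singleton, forall_eq, notMem_empty,
    false_imp_iff, implies_true, and_true] using hcount

theorem zeroProb_pinZero_mul_zeroCount [Finite V] {C : List (Finset V)} {S : Finset V} {v : V}
    (hv : v ∉ S) (hC : ∀ cl ∈ pinZero C S, cl.Nonempty) :
    zeroProb (pinZero C S) v * zeroCount C S = zeroCount C (insert v S) := by
  have h := zeroProb_mul_zeroCount hC v
  rw [zeroCount_pinZero C (disjoint_empty_right S), union_empty,
    zeroCount_pinZero C (disjoint_singleton_right.2 hv), union_singleton] at h
  push_cast at h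
  rw [mul_left_comm] at h
  exact mul_left_cancel₀ (by positivity) h

theorem prod_zeroProb_mul_zeroCount [Finite V] {C : List (Finset V)} {m : ℕ} {X : Fin m → V}
    (hX : Function.Injective X)
    (hC : ∀ i, ∀ cl ∈ pinZero C ((univ.filter (· < i)).image X), cl.Nonempty) :
    (∏ i, zeroProb (pinZero C ((univ.filter (· < i)).image X)) (X i)) * zeroCount C ∅ =
      zeroCount C (univ.image X) := by
  let S (k : Fin (m + 1)) : Finset V := (univ.filter (·.castSucc < k)).image X
  have hS_succ (i : Fin m) : S i.succ = insert (X i) ((univ.filter (· < i)).image X) := by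
    rw [← image_insert]
    refine congrArg (image X) (Finset.ext fun b => ?_)
    simp [Fin.castSucc_lt_succ_iff, le_iff_eq_or_lt]
  have hstep (i : Fin m) : zeroProb (pinZero C ((univ.filter (· < i)).image X)) (X i) *
      (zeroCount C (S i.castSucc) : ℝ) = zeroCount C (S i.succ) := by
    rw [hS_succ]
    exact zeroProb_pinZero_mul_zeroCount (by simp [hX.eq_iff]) (hC i)
  simpa [S, Fin.castSucc_lt_last] using
    prod_mul_eq_apply_last (fun k => (zeroCount C (S k) : ℝ)) _ hstep

theorem one_sub_prod_zeroProb_mul_zeroCount [Finite V] {C : List (Finset V)} {m : ℕ}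
    {X : Fin m → V} (hX : Function.Injective X)
    (hC : ∀ i, ∀ cl ∈ pinZero C ((univ.filter (· < i)).image X), cl.Nonempty) :
    (1 - ∏ i, zeroProb (pinZero C ((univ.filter (· < i)).image X)) (X i)) * zeroCount C ∅ =
      zeroCount (univ.image X :: C) ∅ := by
  rw [sub_mul, one_mul, prod_zeroProb_mul_zeroCount hX hC, sub_eq_iff_eq_add]
  exact_mod_cast (zeroCount_cons_add_zeroCount _ _).symm

end Pinning

section Residual

omit [Fintype V]

/-- The clauses of `C` without `x`, together with the clauses of `L` from which `x` is removed: what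
is left of `C` when, of its clauses containing `x`, only those in `L` are kept, with `x = 0`. For
`L = [c_{k+1}, …, c_d]` it is the formula `F_k` above. -/
def residualCnf (C : List (Finset V)) (x : V) (L : List (Finset V)) : List (Finset V) :=
  C.filter (fun cl => decide (x ∉ cl)) ++ L.map (fun cl => cl.erase x)

theorem zeroCount_residualCnf_cons (C : List (Finset V)) (x : V) (a : Finset V)
    (L : List (Finset V)) (S : Finset V) :
    zeroCount (residualCnf C x (a :: L)) S = zeroCount (a.erase x :: residualCnf C x L) S :=
  zeroCount_congr (fun _ => List.perm_middle.mem_iff) S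

theorem zeroCount_residualCnf_nil (C : List (Finset V)) (x : V) :
    zeroCount (residualCnf C x []) ∅ = 2 * NSat C x true := by
  rw [residualCnf, List.map_nil, List.append_nil, zeroCount_filter_notMem]

theorem mem_residualCnf_filter_mem_iff {C : List (Finset V)} {x : V} {cl : Finset V} :
    cl ∈ residualCnf C x (C.filter (fun cl => decide (x ∈ cl))) ↔ cl ∈ pinZero C {x} := by
  simp only [residualCnf, pinZero, List.mem_append, List.mem_filter, List.mem_map,
    decide_eq_true_eq, sdiff_singleton_eq_erase]
  constructor
  · rintro (⟨hcl, hx⟩ | ⟨a, ⟨ha, -⟩, rfl⟩)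
    · exact ⟨cl, hcl, erase_eq_of_notMem hx⟩
    · exact ⟨a, ha, rfl⟩
  · rintro ⟨a, ha, rfl⟩
    by_cases hx : x ∈ a
    · exact Or.inr ⟨a, ⟨ha, hx⟩, rfl⟩
    · exact Or.inl (by rw [erase_eq_of_notMem hx]; exact ⟨ha, hx⟩)

theorem zeroCount_residualCnf_filter_mem (C : List (Finset V)) (x : V) :
    zeroCount (residualCnf C x (C.filter (fun cl => decide (x ∈ cl)))) ∅ = 2 * NSat C x false := by
  rw [zeroCount_congr (fun _ => mem_residualCnf_filter_mem_iff),
    zeroCount_pinZero C (disjoint_empty_right _), union_empty, card_singleton, pow_one,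
    zeroCount_singleton]

theorem rcnf_eq_zeroCount_residualCnf_div (C : List (Finset V)) (x : V) :
    Rcnf C x = (zeroCount (residualCnf C x (C.filter (fun cl => decide (x ∈ cl)))) ∅ : ℝ) /
      zeroCount (residualCnf C x []) ∅ := by
  rw [zeroCount_residualCnf_filter_mem, zeroCount_residualCnf_nil, Rcnf]
  push_cast
  rw [mul_div_mul_left _ _ two_ne_zero]

end Residual

/-- let `C` be a monotone CNF formula whose clauses are all nonempty, let the
clauses containing `x` be exactly `c_1,…,c_d` (`d ≥ 1`), with `w_j = |c_j| − 1 ≥ 1` for all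
`j`, let `x_{j,1},…,x_{j,w_j}` enumerate the variables of `c_j` other than `x`, and suppose
every clause of every sub-instance `C_{j,i}` is nonempty.  Then
`R(C,x) = ∏_j (1 − ∏_i R(C_{j,i},x_{j,i})/(1 + R(C_{j,i},x_{j,i})))`. -/
theorem stmt1 (C : List (Finset V)) (hC : ∀ cl ∈ C, cl.Nonempty) (x : V)
    (d : ℕ) (hd : 1 ≤ d) (c : Fin d → Finset V)
    (hc : C.filter (fun cl => decide (x ∈ cl)) = List.ofFn c)
    (w : Fin d → ℕ) (hw : ∀ j, w j + 1 = (c j).card) (hw1 : ∀ j, 1 ≤ w j)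
    (X : (j : Fin d) → Fin (w j) → V) (hXinj : ∀ j, Function.Injective (X j))
    (hXim : ∀ j, Finset.image (X j) Finset.univ = (c j).erase x)
    (hne : ∀ (j : Fin d) (i : Fin (w j)), ∀ cl ∈ CnfSub C x c (X j) j i, cl.Nonempty) :
    Rcnf C x = ∏ j : Fin d, (1 - ∏ i : Fin (w j),
      Rcnf (CnfSub C x c (X j) j i) (X j i) / (1 + Rcnf (CnfSub C x c (X j) j i) (X j i))) := by
  have hmodels : (zeroCount (residualCnf C x []) ∅ : ℝ) ≠ 0 := by
    rw [zeroCount_residualCnf_nil]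
    exact_mod_cast (Nat.mul_pos two_pos (nSat_true_pos hC x)).ne'
  rw [rcnf_eq_zeroCount_residualCnf_div, div_eq_iff hmodels, hc]
  let F (k : ℕ) : List (Finset V) := residualCnf C x ((List.ofFn c).drop k)
  have hstep (j : Fin d) : (1 - ∏ i, zeroProb (CnfSub C x c (X j) j i) (X j i)) *
      zeroCount (F (j + 1)) ∅ = zeroCount (F j) ∅ := by
    have hdrop : (List.ofFn c).drop j = c j :: (List.ofFn c).drop (j + 1) := by
      rw [List.drop_eq_getElem_cons (by simp), List.getElem_ofFn]
    simp only [F]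
    rw [hdrop, zeroCount_residualCnf_cons, ← hXim]
    exact one_sub_prod_zeroProb_mul_zeroCount (hXinj j) (hne j)
  have hnil : residualCnf C x [] = F d := by
    rw [← List.drop_of_length_le (List.length_ofFn (f := c)).le]
  rw [hnil]
  exact (prod_mul_eq_apply_zero (fun k : Fin (d + 1) => (zeroCount (F k) ∅ : ℝ)) _ hstep).symm
end

section
/- Fix α = 0.981, an integer d ≥ 1, and integers w_1,…,w_d ≥ 1. For every two-layer vector t̂ = (t̂_{a,b})_{1≤a≤d, 1≤b≤w_a} with all t̂_{a,b} ∈ (0,1/2], setting t_a = 2^{w_a−1}·∏_{b=1}^{w_a} t̂_{a,b} (so each t_a ∈ (0,1/2]), one has κ̂_d^{(w_1,…,w_d)}(t̂) ≤ κ_d^{(w_1,…,w_d)}(t). Consequently, the supremum of κ̂_d^{(w_1,…,w_d)} over (0,1/2]^{w_1+⋯+w_d} equals the supremum of κ_d^{(w_1,…,w_d)} over (0,1/2]^d. -/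
open Finset

/-- `α^{-⌈log_4 (w+1)⌉}` with `α = 0.981`; for `w ≥ 1`, `⌈log_4 (w+1)⌉ = Nat.clog 4 (w+1)`. -/
noncomputable def amort (w : ℕ) : ℝ := (0.981 : ℝ) ^ (-(Nat.clog 4 (w + 1) : ℤ))

/-- `T(t,w) = (t/2^{w−1})/(1 − t/2^{w−1}) · ((1−t)/√t + (w−1)/√2)`. -/
noncomputable def Tfun (t : ℝ) (w : ℕ) : ℝ :=
  (t / 2 ^ (w - 1)) / (1 - t / 2 ^ (w - 1)) * ((1 - t) / Real.sqrt t + ((w : ℝ) - 1) / Real.sqrt 2)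

/-- `g(h) = √(h/(1+h))`. -/
noncomputable def gfun (h : ℝ) : ℝ := Real.sqrt (h / (1 + h))

/-- The single-layer decay rate
`κ_d^{(w_1,…,w_d)}(t) = g(∏_j ĥ(t_j,w_j)) · Σ_a T(t_a,w_a) · α^{−⌈log_4(w_a+1)⌉}`. -/
noncomputable def kap (d : ℕ) (w : Fin d → ℕ) (t : Fin d → ℝ) : ℝ :=
  gfun (∏ j, (1 - t j / 2 ^ (w j - 1))) * ∑ a, Tfun (t a) (w a) * amort (w a)

/-- The two-layer decay rate `κ̂_d^{(w_1,…,w_d)}(t̂)`. -/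
noncomputable def khat (d : ℕ) (w : Fin d → ℕ) (th : (a : Fin d) → Fin (w a) → ℝ) : ℝ :=
  Real.sqrt ((∏ a, (1 - ∏ b, th a b)) / (1 + ∏ a, (1 - ∏ b, th a b))) *
    ∑ a, amort (w a) * ((∏ b, th a b) / (1 - ∏ b, th a b)) *
      ∑ b, (1 - th a b) / Real.sqrt (th a b)

/-!
The operation `(x, y) ↦ 2xy` makes `(0, 1/2]` a commutative monoid with unit `1/2`, and `t_a` is the
product of the block `t̂_{a,·}` in it. In the variables `u = √(2x)` and `v = √(2y)` in `(0, 1]`, the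
summand `f(x) = (1 - x)/√x` satisfies
`√2 (f(2xy) + f(1/2) - f(x) - f(y)) = (1 - u)(1 - v)(2 - uv)/(uv) ≥ 0`.
Hence replacing two entries of a block by their monoid product and the unit does not decrease
`∑ f`, while every `P_a` is unchanged. Merging a whole block in this way bounds `κ̂(t̂)` by `κ(t)`,
with equality when each block is already `t_a` padded with entries `1/2`.
-/

section MergedProduct

variable {ι K : Type*} {s : Finset ι}

lemma two_pow_mul_prod_cons [CommSemiring K] {i : ι} (hi : i ∉ s) (hs : s.Nonempty) (x : ι → K) :
    2 ^ (#(cons i s hi) - 1) * ∏ j ∈ cons i s hi, x j =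
      2 * x i * (2 ^ (#s - 1) * ∏ j ∈ s, x j) := by
  rw [card_cons, prod_cons, Nat.add_sub_cancel, ← mul_pow_sub_one hs.card_ne_zero]
  ring

lemma two_mul_mul_mem_Ioc [Semifield K] [LinearOrder K] [IsStrictOrderedRing K] {x y : K}
    (hx : x ∈ Set.Ioc 0 (1 / 2)) (hy : y ∈ Set.Ioc 0 (1 / 2)) :
    2 * x * y ∈ Set.Ioc 0 (1 / 2) := by
  obtain ⟨hx0, hx1⟩ := hx
  obtain ⟨hy0, hy1⟩ := hy
  refine ⟨by positivity, ?_⟩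
  calc 2 * x * y ≤ 2 * (1 / 2) * (1 / 2) := by gcongr
    _ = 1 / 2 := by ring

lemma two_pow_mul_prod_mem_Ioc [Semifield K] [LinearOrder K] [IsStrictOrderedRing K]
    (hs : s.Nonempty) {x : ι → K} (hx : ∀ i ∈ s, x i ∈ Set.Ioc 0 (1 / 2)) :
    2 ^ (#s - 1) * ∏ i ∈ s, x i ∈ Set.Ioc 0 (1 / 2) := by
  induction hs using Nonempty.cons_induction with
  | singleton i => simpa using hx i
  | cons i s hi hs ih =>
    rw [forall_mem_cons] at hx
    rw [two_pow_mul_prod_cons hi hs]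
    exact two_mul_mul_mem_Ioc hx.1 (ih hx.2)

/-- The block with entry `t` at `i` and all other entries `1 / 2`, used as the two-layer lift of a
single-layer value `t`. -/
def padHalf [DecidableEq ι] [DivisionSemiring K] (i : ι) (t : K) : ι → K :=
  Function.update (fun _ ↦ 1 / 2) i t

lemma two_pow_mul_prod_padHalf [DecidableEq ι] [Semifield K] [NeZero (2 : K)] {i : ι} (hi : i ∈ s)
    (t : K) : 2 ^ (#s - 1) * ∏ j ∈ s, padHalf i t j = t := by
  rw [padHalf, prod_update_of_mem hi, prod_const, card_sdiff_of_subset (singleton_subset_iff.2 hi),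
    card_singleton, mul_left_comm, ← mul_pow, mul_one_div_cancel two_ne_zero, one_pow, mul_one]

lemma padHalf_mem_Ioc [DecidableEq ι] [Semifield K] [LinearOrder K] [IsStrictOrderedRing K]
    (i : ι) {t : K} (ht : t ∈ Set.Ioc 0 (1 / 2)) (j : ι) : padHalf i t j ∈ Set.Ioc 0 (1 / 2) :=
  (Function.forall_update_iff _ fun _ z ↦ z ∈ Set.Ioc 0 (1 / 2)).2
    ⟨ht, fun _ _ ↦ ⟨one_half_pos, le_rfl⟩⟩ j

end MergedProduct

section SumOneSubDivSqrt

lemma two_sub_sq_div_add_le {K : Type*} [Field K] [LinearOrder K] [IsStrictOrderedRing K] {u v : K}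
    (hu : u ∈ Set.Ioc 0 1) (hv : v ∈ Set.Ioc 0 1) :
    (2 - u ^ 2) / u + (2 - v ^ 2) / v ≤ (2 - (u * v) ^ 2) / (u * v) + 1 := by
  obtain ⟨hu0, hu1⟩ := hu
  obtain ⟨hv0, hv1⟩ := hv
  have gap : (2 - (u * v) ^ 2) / (u * v) + 1 - ((2 - u ^ 2) / u + (2 - v ^ 2) / v) =
      (1 - u) * (1 - v) * (2 - u * v) / (u * v) := by
    field_simp
    ring
  have huv : u * v ≤ 2 := (mul_le_one₀ hu1 hv0.le hv1).trans one_le_two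
  have gap_nonneg : 0 ≤ (1 - u) * (1 - v) * (2 - u * v) / (u * v) :=
    div_nonneg (mul_nonneg (mul_nonneg (sub_nonneg.2 hu1) (sub_nonneg.2 hv1)) (sub_nonneg.2 huv))
      (mul_pos hu0 hv0).le
  exact sub_nonneg.1 (gap ▸ gap_nonneg)

lemma one_sub_div_sqrt_eq {x : ℝ} (hx : 0 ≤ x) :
    (1 - x) / √x = (2 - √(2 * x) ^ 2) / √(2 * x) / √2 := by
  rw [Real.sq_sqrt (by positivity), Real.sqrt_mul zero_le_two, div_div, mul_right_comm,
    Real.mul_self_sqrt zero_le_two, ← mul_one_sub, mul_div_mul_left _ _ two_ne_zero]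

lemma one_sub_half_div_sqrt_half : (1 - 1 / 2 : ℝ) / √(1 / 2) = 1 / √2 := by
  rw [one_sub_div_sqrt_eq (by norm_num)]
  norm_num

lemma one_sub_div_sqrt_add_le {x y : ℝ} (hx : x ∈ Set.Ioc 0 (1 / 2)) (hy : y ∈ Set.Ioc 0 (1 / 2)) :
    (1 - x) / √x + (1 - y) / √y ≤ (1 - 2 * x * y) / √(2 * x * y) + 1 / √2 := by
  have sqrt_two_mul_mem : ∀ {z : ℝ}, z ∈ Set.Ioc 0 (1 / 2) → √(2 * z) ∈ Set.Ioc 0 1 := by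
    rintro z ⟨hz0, hz1⟩
    exact ⟨by positivity, Real.sqrt_le_one.2 (by linarith)⟩
  have sqrt_mul_sqrt : √(2 * (2 * x * y)) = √(2 * x) * √(2 * y) := by
    rw [← Real.sqrt_mul (mul_nonneg zero_le_two hx.1.le)]
    ring_nf
  rw [one_sub_div_sqrt_eq hx.1.le, one_sub_div_sqrt_eq hy.1.le,
    one_sub_div_sqrt_eq (two_mul_mul_mem_Ioc hx hy).1.le, sqrt_mul_sqrt, ← add_div, ← add_div]
  refine div_le_div_of_nonneg_right ?_ (Real.sqrt_nonneg 2)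
  exact two_sub_sq_div_add_le (sqrt_two_mul_mem hx) (sqrt_two_mul_mem hy)

variable {ι : Type*} {s : Finset ι}

lemma sum_one_sub_div_sqrt_le (hs : s.Nonempty) {x : ι → ℝ}
    (hx : ∀ i ∈ s, x i ∈ Set.Ioc 0 (1 / 2)) :
    ∑ i ∈ s, (1 - x i) / √(x i) ≤
      (1 - 2 ^ (#s - 1) * ∏ i ∈ s, x i) / √(2 ^ (#s - 1) * ∏ i ∈ s, x i) +
        ((#s : ℝ) - 1) / √2 := by
  induction hs using Nonempty.cons_induction with
  | singleton i => simp
  | cons i s hi hs ih =>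
    rw [forall_mem_cons] at hx
    have merge_head := one_sub_div_sqrt_add_le hx.1 (two_pow_mul_prod_mem_Ioc hs hx.2)
    have merge_tail := ih hx.2
    rw [two_pow_mul_prod_cons hi hs, sum_cons, card_cons, Nat.cast_succ, add_sub_right_comm,
      add_div]
    linarith

lemma sum_one_sub_div_sqrt_padHalf [DecidableEq ι] {i : ι} (hi : i ∈ s) (t : ℝ) :
    ∑ j ∈ s, (1 - padHalf i t j) / √(padHalf i t j) =
      (1 - t) / √t + ((#s : ℝ) - 1) / √2 := by
  simp only [padHalf, Function.apply_update (fun _ (z : ℝ) ↦ (1 - z) / √z)]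
  rw [sum_update_of_mem hi, sum_const, one_sub_half_div_sqrt_half,
    card_sdiff_of_subset (singleton_subset_iff.2 hi), card_singleton, nsmul_eq_mul,
    Nat.cast_pred (card_pos.2 ⟨i, hi⟩), mul_one_div]

end SumOneSubDivSqrt

section DecayRate

variable {d : ℕ} {w : Fin d → ℕ}

lemma amort_nonneg (n : ℕ) : 0 ≤ amort n := zpow_nonneg (by norm_num) _

lemma kap_two_pow_mul (P : Fin d → ℝ) :
    kap d w (fun a ↦ 2 ^ (w a - 1) * P a) =
      gfun (∏ a, (1 - P a)) * ∑ a, amort (w a) * (P a / (1 - P a)) *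
        ((1 - 2 ^ (w a - 1) * P a) / √(2 ^ (w a - 1) * P a) + ((w a : ℝ) - 1) / √2) := by
  have cancel (a : Fin d) : 2 ^ (w a - 1) * P a / 2 ^ (w a - 1) = P a :=
    mul_div_cancel_left₀ _ (by positivity)
  simp only [kap, Tfun, cancel]
  congr! 2
  ring

lemma khat_le_kap (hw : ∀ a, 1 ≤ w a) {th : (a : Fin d) → Fin (w a) → ℝ}
    (hth : ∀ a b, th a b ∈ Set.Ioc 0 (1 / 2)) :
    khat d w th ≤ kap d w (fun a ↦ 2 ^ (w a - 1) * ∏ b, th a b) := by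
  rw [kap_two_pow_mul]
  refine mul_le_mul_of_nonneg_left (sum_le_sum fun a _ ↦ ?_) (Real.sqrt_nonneg _)
  have hP0 : 0 ≤ ∏ b, th a b := prod_nonneg fun b _ ↦ (hth a b).1.le
  have hP1 : ∏ b, th a b ≤ 1 :=
    prod_le_one (fun b _ ↦ (hth a b).1.le) fun b _ ↦ (hth a b).2.trans one_half_lt_one.le
  refine mul_le_mul_of_nonneg_left ?_
    (mul_nonneg (amort_nonneg _) (div_nonneg hP0 (sub_nonneg.2 hP1)))
  simpa only [card_fin] using sum_one_sub_div_sqrt_le ⟨⟨0, hw a⟩, mem_univ _⟩ fun b _ ↦ hth a b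

lemma khat_padHalf (i : (a : Fin d) → Fin (w a)) (t : Fin d → ℝ) :
    khat d w (fun a ↦ padHalf (i a) (t a)) = kap d w t := by
  have merge_eq (a : Fin d) : 2 ^ (w a - 1) * ∏ b, padHalf (i a) (t a) b = t a := by
    simpa only [card_fin] using two_pow_mul_prod_padHalf (mem_univ (i a)) (t a)
  have sum_eq (a : Fin d) : ∑ b, (1 - padHalf (i a) (t a) b) / √(padHalf (i a) (t a) b) =
      (1 - t a) / √(t a) + ((w a : ℝ) - 1) / √2 := by
    simpa only [card_fin] using sum_one_sub_div_sqrt_padHalf (mem_univ (i a)) (t a)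
  have kap_eq := kap_two_pow_mul (w := w) fun a ↦ ∏ b, padHalf (i a) (t a) b
  simp only [merge_eq] at kap_eq
  simp only [kap_eq, khat, gfun, sum_eq]

end DecayRate

/-- for every two-layer vector `t̂` with entries in `(0,1/2]`, setting
`t_a = 2^{w_a−1}·∏_b t̂_{a,b}`, one has `κ̂ ≤ κ`; consequently the suprema agree. -/
theorem stmt6 (d : ℕ) (hd : 1 ≤ d) (w : Fin d → ℕ) (hw : ∀ a, 1 ≤ w a) :
    (∀ th : (a : Fin d) → Fin (w a) → ℝ, (∀ a b, th a b ∈ Set.Ioc (0 : ℝ) (1 / 2)) →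
      khat d w th ≤ kap d w (fun a => 2 ^ (w a - 1) * ∏ b, th a b)) ∧
    (⨆ th : {f : (a : Fin d) → Fin (w a) → ℝ // ∀ a b, f a b ∈ Set.Ioc (0 : ℝ) (1 / 2)},
        khat d w th.1) =
      ⨆ t : {f : Fin d → ℝ // ∀ a, f a ∈ Set.Ioc (0 : ℝ) (1 / 2)}, kap d w t.1 := by
  have first (a : Fin d) : Fin (w a) := ⟨0, hw a⟩
  refine ⟨fun th hth ↦ khat_le_kap hw hth, csSup_eq_csSup_of_forall_exists_le ?_ ?_⟩
  · rintro _ ⟨⟨th, hth⟩, rfl⟩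
    have merge_mem (a : Fin d) : 2 ^ (w a - 1) * ∏ b, th a b ∈ Set.Ioc (0 : ℝ) (1 / 2) := by
      simpa only [card_fin] using two_pow_mul_prod_mem_Ioc ⟨first a, mem_univ _⟩ fun b _ ↦ hth a b
    exact ⟨_, ⟨⟨_, merge_mem⟩, rfl⟩, khat_le_kap hw hth⟩
  · rintro _ ⟨⟨t, ht⟩, rfl⟩
    have pad_mem (a : Fin d) := padHalf_mem_Ioc (first a) (ht a)
    exact ⟨_, ⟨⟨_, pad_mem⟩, rfl⟩, (khat_padHalf first t).ge⟩
end

section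
/- Fix α = 0.981, an integer d ≥ 2, and integers w_1,…,w_d ≥ 1. For every t = (t_1,…,t_d) ∈ (0,1/2]^d and every index a ∈ {1,…,d}, one has κ_d^{(w_1,…,w_d)}(t) ≤ κ_{d−1}^{(w_1,…,w_d) with w_a removed}(t with t_a removed) + κ_1^{(w_a)}(t_a). -/
open Finset

/-- The single-layer decay rate over an index set `s`:
`κ^{(w_j)_{j∈s}}((t_j)_{j∈s}) = g(∏_{j∈s} ĥ(t_j,w_j)) · Σ_{a∈s} T(t_a,w_a) · α^{−⌈log_4(w_a+1)⌉}`. -/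
noncomputable def kapS {ι : Type*} (s : Finset ι) (w : ι → ℕ) (t : ι → ℝ) : ℝ :=
  gfun (∏ j ∈ s, (1 - t j / 2 ^ (w j - 1))) * ∑ a ∈ s, Tfun (t a) (w a) * amort (w a)

/-!
Every factor `ĥ` lies in `[0, 1]` and `g` is increasing and nonnegative, so `s ↦ g (∏_{j ∈ s} ĥ_j)`
is a nonnegative antitone set function. The summands `T · α^{-⌈log_4 (w+1)⌉}` are nonnegative, and
the product of a nonnegative antitone set function with a nonnegative measure is subadditive.
-/

theorem mul_sum_union_le {ι R : Type*} [DecidableEq ι] [Semiring R] [PartialOrder R]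
    [IsOrderedRing R] {G : Finset ι → R} (hG : Antitone G) (hG₀ : ∀ s, 0 ≤ G s)
    {f : ι → R} (hf : ∀ i, 0 ≤ f i) (s u : Finset ι) :
    G (s ∪ u) * ∑ i ∈ s ∪ u, f i ≤ G s * ∑ i ∈ s, f i + G u * ∑ i ∈ u, f i := by
  have hsum (v : Finset ι) : 0 ≤ ∑ i ∈ v, f i := sum_nonneg fun i _ => hf i
  calc G (s ∪ u) * ∑ i ∈ s ∪ u, f i
      ≤ G (s ∪ u) * (∑ i ∈ s, f i + ∑ i ∈ u, f i) := by
        refine mul_le_mul_of_nonneg_left ?_ (hG₀ _)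
        rw [← sum_union_inter]
        exact le_add_of_nonneg_right (hsum _)
    _ = G (s ∪ u) * ∑ i ∈ s, f i + G (s ∪ u) * ∑ i ∈ u, f i := mul_add _ _ _
    _ ≤ G s * ∑ i ∈ s, f i + G u * ∑ i ∈ u, f i :=
        add_le_add (mul_le_mul_of_nonneg_right (hG subset_union_left) (hsum s))
          (mul_le_mul_of_nonneg_right (hG subset_union_right) (hsum u))

theorem gfun_nonneg (x : ℝ) : 0 ≤ gfun x :=
  Real.sqrt_nonneg _

theorem monotoneOn_gfun : MonotoneOn gfun (Set.Ioi (-1)) := by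
  intro x (hx : -1 < x) y (hy : -1 < y) hxy
  refine Real.sqrt_le_sqrt ((div_le_div_iff₀ (by linarith) (by linarith)).2 ?_)
  linarith

theorem amort_pos (w : ℕ) : 0 < amort w :=
  zpow_pos (by norm_num) _

theorem div_two_pow_mem_Icc {t : ℝ} (ht : t ∈ Set.Icc 0 1) (n : ℕ) :
    t / 2 ^ n ∈ Set.Icc (0 : ℝ) 1 :=
  unitInterval.div_mem ht.1 (by positivity) (ht.2.trans (one_le_pow₀ one_le_two))

theorem one_sub_div_two_pow_mem_Icc {t : ℝ} (ht : t ∈ Set.Icc 0 1) (n : ℕ) :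
    1 - t / 2 ^ n ∈ Set.Icc (0 : ℝ) 1 :=
  Set.Icc.one_sub_mem (div_two_pow_mem_Icc ht n)

theorem Tfun_nonneg {t : ℝ} (ht : t ∈ Set.Icc 0 1) {w : ℕ} (hw : 1 ≤ w) : 0 ≤ Tfun t w := by
  have hsub : (0 : ℝ) ≤ w - 1 := sub_nonneg.2 (Nat.one_le_cast.2 hw)
  have hratio : 0 ≤ t / 2 ^ (w - 1) / (1 - t / 2 ^ (w - 1)) :=
    div_nonneg (div_two_pow_mem_Icc ht _).1 (one_sub_div_two_pow_mem_Icc ht _).1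
  have hquot : 0 ≤ (1 - t) / √t := div_nonneg (sub_nonneg.2 ht.2) (Real.sqrt_nonneg t)
  exact mul_nonneg hratio (add_nonneg hquot (div_nonneg hsub (Real.sqrt_nonneg 2)))

theorem antitone_gfun_prod {ι : Type*} {h : ι → ℝ} (hh : ∀ i, h i ∈ Set.Icc 0 1) :
    Antitone fun s : Finset ι => gfun (∏ i ∈ s, h i) := by
  have hmem (s : Finset ι) : ∏ i ∈ s, h i ∈ Set.Ioi (-1) :=
    neg_one_lt_zero.trans_le (prod_nonneg fun i _ => (hh i).1)
  have hprod : Antitone fun s : Finset ι => ∏ i ∈ s, h i :=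
    prod_anti_set_of_le_one (fun i => (hh i).1) fun i => (hh i).2
  exact fun s u hsu => monotoneOn_gfun (hmem u) (hmem s) (hprod hsu)

theorem stmt7_general {ι : Type*} [DecidableEq ι] {w : ι → ℕ} (hw : ∀ j, 1 ≤ w j)
    {t : ι → ℝ} (ht : ∀ j, t j ∈ Set.Ioo 0 1) (s u : Finset ι) :
    kapS (s ∪ u) w t ≤ kapS s w t + kapS u w t := by
  have ht' (j : ι) : t j ∈ Set.Icc 0 1 := Set.Ioo_subset_Icc_self (ht j)
  exact mul_sum_union_le
    (antitone_gfun_prod fun j => one_sub_div_two_pow_mem_Icc (ht' j) (w j - 1))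
    (fun _ => gfun_nonneg _)
    (fun j => mul_nonneg (Tfun_nonneg (ht' j) (hw j)) (amort_pos (w j)).le) s u

/-- sub-additivity: for `d ≥ 2`, `w_j ≥ 1`, `t ∈ (0,1/2]^d` and any index `a`,
`κ_d^{(w_1,…,w_d)}(t) ≤ κ_{d−1}^{(w, a removed)}(t, a removed) + κ_1^{(w_a)}(t_a)`. -/
theorem stmt7 (d : ℕ) (hd : 2 ≤ d) (w : Fin d → ℕ) (hw : ∀ j, 1 ≤ w j)
    (t : Fin d → ℝ) (ht : ∀ j, t j ∈ Set.Ioc (0 : ℝ) (1 / 2)) (a : Fin d) :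
    kapS Finset.univ w t ≤ kapS (Finset.univ.erase a) w t + kapS {a} w t := by
  have ht' (j : Fin d) : t j ∈ Set.Ioo 0 1 := ⟨(ht j).1, (ht j).2.trans_lt one_half_lt_one⟩
  simpa only [erase_union_eq a univ (mem_univ a)] using
    stmt7_general hw ht' (univ.erase a) {a}
end

section
/- Let w ≥ 1 be an integer and let t_1,…,t_w ∈ (0,1/2]. Set s = 2^{w−1} · ∏_{b=1}^{w} t_b (so 0 < s ≤ 1/2). Then Σ_{b=1}^{w} (1 − t_b)/√(t_b) ≤ (1 − s)/√s + (w−1)/√2. -/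
open Finset

/-!
For `t > 0` we have `(1 - t) / √t = 2 sinh (-log t / 2)`, and `sinh` is convex on `[0, ∞)`. The
increments `d ↦ f (a + d) - f a`, `d ≥ 0`, of a convex function are superadditive: moving two points
of an interval apart while keeping their sum fixed does not decrease the sum of the values of `f`,
so all the increments may be carried by a single point. Take `f = sinh` and `a = -log c / 2`, where
`c ≤ 1` is an upper bound for the `t i`; the increments are then `log (c / t i) / 2`.
-/

section Convex

variable {𝕜 E β ι : Type*}

theorem add_le_add_of_convexOn_of_mem_segment [Semiring 𝕜] [PartialOrder 𝕜] [AddCommGroup E]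
    [Module 𝕜 E] [AddCommMonoid β] [PartialOrder β] [IsOrderedAddMonoid β] [Module 𝕜 β]
    {s : Set E} {f : E → β} (hf : ConvexOn 𝕜 s f) {p q x y : E} (hp : p ∈ s) (hq : q ∈ s)
    (hx : x ∈ segment 𝕜 p q) (hxy : x + y = p + q) : f x + f y ≤ f p + f q := by
  obtain ⟨u, v, hu, hv, huv, rfl⟩ := hx
  have hvu : v + u = 1 := by rw [add_comm, huv]
  have hy : y = v • p + u • q := by
    rw [← add_right_inj (u • p + v • q), hxy, add_add_add_comm, ← add_smul, ← add_smul, huv, hvu,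
      one_smul, one_smul]
  calc f (u • p + v • q) + f y ≤ (u • f p + v • f q) + (v • f p + u • f q) :=
        add_le_add (hf.2 hp hq hu hv huv) (hy ▸ hf.2 hp hq hv hu hvu)
    _ = f p + f q := by
        rw [add_add_add_comm, ← add_smul, ← add_smul, huv, hvu, one_smul, one_smul]

theorem sum_sub_le_sub_of_convexOn_Ici [Field 𝕜] [LinearOrder 𝕜] [IsStrictOrderedRing 𝕜]
    [AddCommGroup β] [PartialOrder β] [IsOrderedAddMonoid β] [Module 𝕜 β] {f : 𝕜 → β} {a : 𝕜}
    (hf : ConvexOn 𝕜 (Set.Ici a) f) {s : Finset ι} {d : ι → 𝕜} (hd : ∀ i ∈ s, 0 ≤ d i) :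
    ∑ i ∈ s, (f (a + d i) - f a) ≤ f (a + ∑ i ∈ s, d i) - f a := by
  have subadditive (x y : 𝕜) (hx : 0 ≤ x) (hy : 0 ≤ y) :
      f a - f (a + (x + y)) ≤ (f a - f (a + x)) + (f a - f (a + y)) := by
    have hmem : a + x ∈ segment 𝕜 a (a + (x + y)) := by
      rw [segment_eq_Icc (by linarith)]
      constructor <;> linarith
    have hspread : f (a + x) + f (a + y) ≤ f a + f (a + (x + y)) :=
      add_le_add_of_convexOn_of_mem_segment hf Set.self_mem_Ici
        (Set.mem_Ici.2 (by linarith)) hmem (by ring)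
    rw [sub_add_sub_comm, sub_le_sub_iff, add_assoc]
    gcongr
  have hsum := le_sum_of_subadditive_on_pred (fun x ↦ f a - f (a + x)) (0 ≤ ·) (by simp)
    subadditive (fun _ _ ↦ add_nonneg) d hd
  simpa only [← sum_neg_distrib, neg_sub] using neg_le_neg hsum

end Convex

theorem convexOn_sinh_Ici : ConvexOn ℝ (Set.Ici 0) Real.sinh := by
  refine MonotoneOn.convexOn_of_deriv (convex_Ici 0) Real.continuous_sinh.continuousOn
    Real.differentiable_sinh.differentiableOn ?_
  rw [Real.deriv_sinh]
  exact Real.cosh_strictMonoOn.monotoneOn.mono interior_subset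

theorem one_sub_div_sqrt_eq_two_mul_sinh {t : ℝ} (ht : 0 < t) :
    (1 - t) / √t = 2 * Real.sinh (-Real.log t / 2) := by
  rw [neg_div, ← Real.log_sqrt ht.le, Real.sinh_neg, Real.sinh_log (Real.sqrt_pos.2 ht), sub_div,
    Real.div_sqrt, one_div]
  ring

theorem log_prod_div_pow_card_sub_one {ι : Type*} {s : Finset ι} (hs : s.Nonempty) {c : ℝ}
    (hc : c ≠ 0) {t : ι → ℝ} (ht : ∀ i ∈ s, t i ≠ 0) :
    Real.log ((∏ i ∈ s, t i) / c ^ (#s - 1)) =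
      Real.log c - ∑ i ∈ s, (Real.log c - Real.log (t i)) := by
  rw [Real.log_div (prod_ne_zero_iff.2 ht) (pow_ne_zero _ hc), Real.log_prod ht, Real.log_pow,
    Nat.cast_pred hs.card_pos, sum_sub_distrib, sum_const, nsmul_eq_mul]
  ring

theorem stmt10_general {ι : Type*} {s : Finset ι} (hs : s.Nonempty) {c : ℝ} (hc : c ≤ 1)
    {t : ι → ℝ} (ht : ∀ i ∈ s, t i ∈ Set.Ioc 0 c) :
    ∑ i ∈ s, (1 - t i) / √(t i) ≤
      (1 - (∏ i ∈ s, t i) / c ^ (#s - 1)) / √((∏ i ∈ s, t i) / c ^ (#s - 1)) +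
        (#s - 1) * ((1 - c) / √c) := by
  have hc0 : 0 < c := hs.elim fun i hi ↦ (ht i hi).1.trans_le (ht i hi).2
  have hprod : 0 < (∏ i ∈ s, t i) / c ^ (#s - 1) :=
    div_pos (prod_pos fun i hi ↦ (ht i hi).1) (pow_pos hc0 _)
  let a := -Real.log c / 2
  let d i := (Real.log c - Real.log (t i)) / 2
  have ha : 0 ≤ a := div_nonneg (neg_nonneg.2 (Real.log_nonpos hc0.le hc)) zero_le_two
  have hd : ∀ i ∈ s, 0 ≤ d i := fun i hi ↦
    div_nonneg (sub_nonneg.2 (Real.log_le_log (ht i hi).1 (ht i hi).2)) zero_le_two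
  have hterm : ∀ i ∈ s, (1 - t i) / √(t i) = 2 * Real.sinh (a + d i) := fun i hi ↦ by
    have hlog : -Real.log (t i) / 2 = a + d i := by
      simp only [a, d]
      ring
    rw [one_sub_div_sqrt_eq_two_mul_sinh (ht i hi).1, hlog]
  have hmerged : -Real.log ((∏ i ∈ s, t i) / c ^ (#s - 1)) / 2 = a + ∑ i ∈ s, d i := by
    rw [log_prod_div_pow_card_sub_one hs hc0.ne' fun i hi ↦ (ht i hi).1.ne', ← sum_div]
    ring
  have hsinh := sum_sub_le_sub_of_convexOn_Ici
    (convexOn_sinh_Ici.subset (Set.Ici_subset_Ici.2 ha) (convex_Ici a)) hd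
  rw [sum_sub_distrib, sum_const, nsmul_eq_mul] at hsinh
  rw [sum_congr rfl hterm, ← mul_sum, one_sub_div_sqrt_eq_two_mul_sinh hprod, hmerged,
    one_sub_div_sqrt_eq_two_mul_sinh hc0]
  linarith

/-- boundary extremality, via Karamata: for `t_1,…,t_w ∈ (0,1/2]` and
`s = 2^{w−1}·∏_b t_b`, one has `Σ_b (1−t_b)/√t_b ≤ (1−s)/√s + (w−1)/√2`. -/
theorem stmt10 (w : ℕ) (hw : 1 ≤ w) (t : Fin w → ℝ)
    (ht : ∀ b, t b ∈ Set.Ioc (0 : ℝ) (1 / 2)) :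
    ∑ b, (1 - t b) / Real.sqrt (t b) ≤
      (1 - 2 ^ (w - 1) * ∏ b, t b) / Real.sqrt (2 ^ (w - 1) * ∏ b, t b) +
        ((w : ℝ) - 1) / Real.sqrt 2 := by
  have hhalf : (1 - 1 / 2 : ℝ) / √(1 / 2) = (√2)⁻¹ := by
    rw [sub_half, Real.div_sqrt, one_div, Real.sqrt_inv]
  have hcap := stmt10_general (univ_nonempty_iff.2 (Fin.pos_iff_nonempty.1 hw))
    one_half_lt_one.le fun b _ ↦ ht b
  rw [hhalf] at hcap
  simpa [div_eq_mul_inv, mul_comm] using hcap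
end

section
/- Let C be an at-most-one CSP instance in which every constraint is a set of at most 4 distinct variables and every variable occurs in at most 3 constraints. Let x be a variable occurring in exactly the constraints c_1,…,c_d with d ≥ 1, and set w_j = |c_j| − 1. Then R(C,x) = ∏_{j=1}^{d} 1/(1 + Σ_{i=1}^{w_j} R(C_{j,i}, x_{j,i})), with the convention that R(C_{j,i}, x_{j,i}) = 0 when x_{j,i} was pinned to 1 in forming C_{j,i}, and where an empty product (d = 0) and an empty inner sum (w_j = 0) equal 1 and 0 respectively. -/
open Finset

variable {V : Type*} [Fintype V] [DecidableEq V]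

/-- An assignment `σ` satisfies an at-most-one CSP instance (a finite collection of
constraints, each a finite set of variables) if every constraint contains at most one
variable with value `false` (`false` encodes `0`). -/
def AOSat (C : List (Finset V)) (σ : V → Bool) : Prop :=
  ∀ c ∈ C, (c.filter (fun v => σ v = false)).card ≤ 1

/-- The marginal ratio `R(C,x) = P_C(x=0)/P_C(x=1)` of an at-most-one instance whose set
of variables pinned to `1` so far is `P`; by convention `R = 0` if `x` was pinned to `1`.
(Pinned variables are removed from all constraints, so they are free and do not affect
the ratio.) -/
noncomputable def RAO (C : List (Finset V)) (P : Finset V) (x : V) : ℝ :=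
  if x ∈ P then 0
  else (Nat.card {σ : V → Bool // AOSat C σ ∧ σ x = false} : ℝ) /
    (Nat.card {σ : V → Bool // AOSat C σ ∧ σ x = true} : ℝ)

/-- The set of variables pinned to `1` in forming `C_{j,i}`: all variables (other than `x`)
of the constraints `c_k` with `k > j`, together with all variables of `c_j` other than `x`
and `x_{j,i}` (here `X i`). -/
def aoPins (x : V) {d : ℕ} (c : Fin d → Finset V) {m : ℕ} (X : Fin m → V)
    (j : Fin d) (i : Fin m) : Finset V :=
  (Finset.univ.filter (fun k => j < k)).biUnion (fun k => (c k).erase x) ∪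
    ((c j).erase x).erase (X i)

/-- The constraint list of the sub-instance `C_{j,i}`: constraints of `C` not containing
`x`, plus `c_k ∖ {x}` for `k < j` (the constraints `c_j` and `c_k`, `k > j`, are deleted),
with all pinned variables removed from every constraint. -/
def aoSub (C : List (Finset V)) (x : V) {d : ℕ} (c : Fin d → Finset V) {m : ℕ}
    (X : Fin m → V) (j : Fin d) (i : Fin m) : List (Finset V) :=
  (C.filter (fun cl => decide (x ∉ cl))).map (fun cl => cl \ aoPins x c X j i) ++
    ((List.ofFn c).take j.1).map (fun cl => (cl.erase x) \ aoPins x c X j i)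

/-!
Order the constraints through `x` as `c_1, …, c_d` and let `N_n` be the number of assignments with
`x = 1` which satisfy the constraints avoiding `x` and `c_1, …, c_n`, and are `1` on all of
`c_{n+1}, …, c_d`. Flipping `x` identifies the satisfying assignments with `x = 0` with those
counted by `N_0`, so `R(C, x) = N_0 / N_d` telescopes into the ratios `N_{j-1} / N_j`. An assignment
counted by `N_j` has either no zero in `c_j`, which gives `N_{j-1}`, or exactly one, at some
`x_{j,i}`; those of the latter kind number `R(C_{j,i}, x_{j,i}) N_{j-1}`, because changing that zero
to a one leads back to the assignments counted by `N_{j-1}`.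
-/

section

variable {α : Type*}

lemma aoSat_iff (C : List (Finset α)) (σ : α → Bool) :
    AOSat C σ ↔ ∀ c ∈ C, ∀ a ∈ c, ∀ b ∈ c, σ a = false → σ b = false → a = b := by
  simp only [AOSat, card_le_one, mem_filter]
  grind

lemma aoSat_append (C D : List (Finset α)) (σ : α → Bool) :
    AOSat (C ++ D) σ ↔ AOSat C σ ∧ AOSat D σ :=
  List.forall_mem_append

lemma dependsOn_aoSat {C : List (Finset α)} {s : Set α} (h : ∀ c ∈ C, (c : Set α) ⊆ s) :
    DependsOn (AOSat C) s := fun _ _ hστ =>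
  propext <| forall₂_congr fun c hc => by
    rw [filter_congr fun v hv => by rw [hστ v (h c hc hv)]]

lemma aoSat_map_sdiff [DecidableEq α] {S : Finset α} {σ : α → Bool} (hσ : ∀ v ∈ S, σ v = true)
    (C : List (Finset α)) : AOSat (C.map (· \ S)) σ ↔ AOSat C σ := by
  have hfilter (c : Finset α) : (c \ S).filter (σ · = false) = c.filter (σ · = false) := by grind
  simp only [AOSat, List.forall_mem_map, hfilter]

lemma aoSat_iff_of_forall_mem_of_eq_false {C : List (Finset α)} {x : α} (hx : ∀ c ∈ C, x ∈ c)
    {σ : α → Bool} (hσ : σ x = false) :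
    AOSat C σ ↔ ∀ c ∈ C, ∀ v ∈ c, v ≠ x → σ v = true := by
  rw [aoSat_iff]
  refine forall₂_congr fun c hc => ⟨fun h v hv hvx => ?_, fun h a ha b hb hσa hσb => ?_⟩
  · by_contra hσv
    exact hvx (h v hv x (hx c hc) (by simpa using hσv) hσ)
  · have hfalse : ∀ v ∈ c, σ v = false → v = x := by grind
    rw [hfalse a ha hσa, hfalse b hb hσb]

end

section

variable {ι β : Type*} {Q : (ι → β) → Prop}

lemma card_subtype_eq_pow_mul_of_dependsOn {S : Finset ι} (hQ : DependsOn Q (S : Set ι)ᶜ)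
    (b : β) :
    Nat.card {σ // Q σ} = Nat.card β ^ #S * Nat.card {σ // Q σ ∧ ∀ i ∈ S, σ i = b} := by
  classical
  have hupdate (σ : ι → β) (y : S → β) : Q (Function.updateFinset σ S y) ↔ Q σ :=
    iff_of_eq <| hQ fun i hi => by grind [Function.updateFinset]
  let e : {σ // Q σ} ≃ (S → β) × {σ // Q σ ∧ ∀ i ∈ S, σ i = b} :=
    { toFun σ := (fun i => σ.1 i, ⟨Function.updateFinset σ.1 S fun _ => b,
        (hupdate _ _).2 σ.2, fun i hi => by grind [Function.updateFinset]⟩)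
      invFun p := ⟨Function.updateFinset p.2.1 S p.1, (hupdate _ _).2 p.2.2.1⟩
      left_inv σ := by ext i; grind [Function.updateFinset]
      right_inv p := by
        ext i
        · simp [Function.updateFinset]
        · grind [Function.updateFinset] }
  simp [Nat.card_congr e, Nat.card_prod, Nat.card_fun]

lemma card_subtype_and_eq_of_dependsOn_compl_singleton [Finite β] {i : ι}
    (hQ : DependsOn Q {i}ᶜ) (a b : β) :
    Nat.card {σ // Q σ ∧ σ i = a} = Nat.card {σ // Q σ ∧ σ i = b} := by
  have : Nonempty β := ⟨a⟩
  have hcard (b : β) : Nat.card {σ // Q σ} = Nat.card β * Nat.card {σ // Q σ ∧ σ i = b} := by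
    simpa using card_subtype_eq_pow_mul_of_dependsOn (S := {i}) (by simpa using hQ) b
  exact Nat.eq_of_mul_eq_mul_left Nat.card_pos ((hcard a).symm.trans (hcard b))

end

section

variable {α : Type*}

-- A zero at `x` forces the other variables of `D` to be `1`; then `x` is unconstrained and can be
-- flipped.
lemma card_aoSat_append_and_false {C D : List (Finset α)} {x : α} (hC : ∀ c ∈ C, x ∉ c)
    (hD : ∀ c ∈ D, x ∈ c) :
    Nat.card {σ : α → Bool // AOSat (C ++ D) σ ∧ σ x = false} = Nat.card {σ : α → Bool //
      (AOSat C σ ∧ ∀ c ∈ D, ∀ v ∈ c, v ≠ x → σ v = true) ∧ σ x = true} := by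
  let Q (σ : α → Bool) : Prop := AOSat C σ ∧ ∀ c ∈ D, ∀ v ∈ c, v ≠ x → σ v = true
  have hAOSat : DependsOn (AOSat C) {x}ᶜ :=
    dependsOn_aoSat fun c hc => by simpa using hC c hc
  have hQ : DependsOn Q {x}ᶜ := fun σ τ h => by
    simp only [Q, hAOSat h]
    grind
  have hfalse (σ : α → Bool) : AOSat (C ++ D) σ ∧ σ x = false ↔ Q σ ∧ σ x = false :=
    and_congr_left fun hσ => by
      rw [aoSat_append, aoSat_iff_of_forall_mem_of_eq_false hD hσ]
  rw [Nat.card_congr (Equiv.subtypeEquivRight hfalse),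
    card_subtype_and_eq_of_dependsOn_compl_singleton hQ false true]

/-- The number of satisfying assignments of the instance `C` with the variables in `S` pinned
to `1`. Pinned variables are kept and required to be `true`, so that all counts concern
assignments on `α`. -/
noncomputable def pinnedCount (C : List (Finset α)) (S : Finset α) : ℕ :=
  Nat.card {σ : α → Bool // AOSat C σ ∧ ∀ v ∈ S, σ v = true}

lemma pinnedCount_pos [Finite α] (C : List (Finset α)) (S : Finset α) : 0 < pinnedCount C S :=
  have : Nonempty {σ : α → Bool // AOSat C σ ∧ ∀ v ∈ S, σ v = true} :=
    ⟨fun _ => true, by simp [AOSat]⟩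
  Nat.card_pos

variable [DecidableEq α]

/-- The marginal ratio at `v` of the instance obtained from `C` by pinning the variables in `S`
to `1`, which is `0` by convention for `v ∈ S`. -/
noncomputable def pinnedRatio (C : List (Finset α)) (S : Finset α) (v : α) : ℝ :=
  RAO (C.map (· \ S)) S v

variable [Finite α]

-- `RAO` counts the pinned variables as free: this gives a factor `2 ^ #S` in the numerator and in
-- the denominator, which cancels.
lemma pinnedRatio_mul_pinnedCount (C : List (Finset α)) (S : Finset α) (v : α) :
    pinnedRatio C S v * pinnedCount C (insert v S) =
      Nat.card {σ : α → Bool // (AOSat C σ ∧ ∀ u ∈ S, σ u = true) ∧ σ v = false} := by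
  by_cases hv : v ∈ S
  · have : IsEmpty {σ : α → Bool // (AOSat C σ ∧ ∀ u ∈ S, σ u = true) ∧ σ v = false} :=
      ⟨fun σ => by simpa [σ.2.2] using σ.2.1.2 v hv⟩
    simp [pinnedRatio, RAO, hv]
  have hdep : DependsOn (AOSat (C.map (· \ S))) (S : Set α)ᶜ :=
    dependsOn_aoSat <| List.forall_mem_map.2 fun c _ u hu => by simp_all
  have hcount (b : Bool) : Nat.card {σ : α → Bool // AOSat (C.map (· \ S)) σ ∧ σ v = b} =
      2 ^ #S * Nat.card {σ : α → Bool // (AOSat C σ ∧ ∀ u ∈ S, σ u = true) ∧ σ v = b} := by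
    have hdepb : DependsOn (fun σ : α → Bool => AOSat (C.map (· \ S)) σ ∧ σ v = b)
        (S : Set α)ᶜ := fun σ τ h => by
      simp only [hdep h, h v (by simpa using hv)]
    rw [card_subtype_eq_pow_mul_of_dependsOn hdepb true, Nat.card_eq_fintype_card,
      Fintype.card_bool]
    refine congrArg _ <| Nat.card_congr <| Equiv.subtypeEquivRight fun σ => ?_
    rw [and_right_comm]
    exact and_congr_left fun _ => and_congr_left fun hS => aoSat_map_sdiff hS C
  have htrue : pinnedCount C (insert v S) =
      Nat.card {σ : α → Bool // (AOSat C σ ∧ ∀ u ∈ S, σ u = true) ∧ σ v = true} := by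
    simp only [pinnedCount, forall_mem_insert, and_assoc, and_comm (a := _ = true)]
  have hpos := pinnedCount_pos C (insert v S)
  rw [pinnedRatio, RAO, if_neg hv, hcount, hcount, ← htrue]
  push_cast
  field_simp

lemma pinnedCount_append_singleton_eq_add (C : List (Finset α)) (c S : Finset α) :
    pinnedCount (C ++ [c]) S = pinnedCount C (S ∪ c) + ∑ v ∈ c,
      Nat.card {σ : α → Bool //
        (AOSat C σ ∧ ∀ u ∈ S ∪ c.erase v, σ u = true) ∧ σ v = false} := by
  classical
  cases nonempty_fintype α
  simp only [pinnedCount, Nat.card_eq_fintype_card, Fintype.card_subtype]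
  rw [← card_biUnion, ← card_union_of_disjoint]
  · congr 1
    ext σ
    simp only [aoSat_append, aoSat_iff [c], List.mem_singleton, forall_eq, mem_filter, mem_univ,
      true_and, mem_union, mem_biUnion]
    grind
  · rw [disjoint_left]
    grind
  · intro v _ w _ hvw
    rw [Function.onFun, disjoint_left]
    grind

lemma pinnedCount_append_singleton (C : List (Finset α)) (c S : Finset α) :
    (pinnedCount (C ++ [c]) S : ℝ) =
      pinnedCount C (S ∪ c) * (1 + ∑ v ∈ c, pinnedRatio C (S ∪ c.erase v) v) := by
  rw [pinnedCount_append_singleton_eq_add, mul_add, mul_one, mul_sum]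
  push_cast
  congr 1
  refine sum_congr rfl fun v hv => ?_
  rw [← pinnedRatio_mul_pinnedCount, ← union_insert, insert_erase hv, mul_comm]

end

section

variable {α : Type*} [DecidableEq α] (C : List (Finset α)) (x : α) {d : ℕ} (c : Fin d → Finset α)

/-- The constraints of `C` avoiding `x` together with `c k` for `k < n`. -/
def stageConstraints (n : ℕ) : List (Finset α) :=
  C.filter (fun cl => decide (x ∉ cl)) ++ (List.ofFn c).take n

/-- The variable `x` together with the variables of `c k` for `k ≥ n`. -/
def stagePins (n : ℕ) : Finset α :=
  insert x (({k | n ≤ k.1} : Finset (Fin d)).biUnion c)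

/-- The number of satisfying assignments at stage `n`, all of which have `x` equal to `1`. With `j`
numbered from `0`, the stages `j` and `j + 1` count the satisfying assignments of the paper's `C_j`
with `x = 0` (and `x` then flipped to `1`) and with `x = 1`. -/
noncomputable def stageCount (n : ℕ) : ℕ :=
  pinnedCount (stageConstraints C x c n) (stagePins x c n)

lemma stageConstraints_succ (j : Fin d) :
    stageConstraints C x c (j + 1) = stageConstraints C x c j ++ [c j] := by
  simp [stageConstraints, List.take_succ_eq_append_getElem]

lemma stagePins_succ_union (j : Fin d) : stagePins x c (j + 1) ∪ c j = stagePins x c j := by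
  ext v
  simp only [stagePins, mem_union, mem_insert, mem_biUnion, mem_filter, mem_univ, true_and]
  grind

variable {m : ℕ} (X : Fin m → α) (j : Fin d) (i : Fin m)

lemma insert_aoPins :
    insert x (aoPins x c X j i) = stagePins x c (j + 1) ∪ (c j).erase (X i) := by
  ext v
  simp only [aoPins, stagePins, mem_union, mem_insert, mem_biUnion, mem_filter, mem_univ,
    true_and, mem_erase, Fin.lt_def, Nat.succ_le_iff]
  grind

lemma aoSub_eq_map_stageConstraints :
    aoSub C x c X j i = (stageConstraints C x c j).map (· \ insert x (aoPins x c X j i)) := by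
  rw [aoSub, stageConstraints, List.map_append]
  congr 1
  · refine List.map_congr_left fun cl hcl => ?_
    rw [sdiff_insert_of_notMem (by simpa using (List.mem_filter.1 hcl).2)]
  · simp only [sdiff_insert, erase_sdiff_comm]

lemma RAO_aoSub_eq_pinnedRatio (hX : X i ≠ x) :
    RAO (aoSub C x c X j i) (aoPins x c X j i) (X i) =
      pinnedRatio (stageConstraints C x c j) (stagePins x c (j + 1) ∪ (c j).erase (X i)) (X i) := by
  rw [pinnedRatio, ← insert_aoPins, ← aoSub_eq_map_stageConstraints]
  simp only [RAO, mem_insert, hX, false_or]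

lemma sum_RAO_aoSub_eq_sum_pinnedRatio (hXinj : Function.Injective X)
    (hXim : image X univ = (c j).erase x) :
    ∑ i, RAO (aoSub C x c X j i) (aoPins x c X j i) (X i) =
      ∑ v ∈ c j,
        pinnedRatio (stageConstraints C x c j) (stagePins x c (j + 1) ∪ (c j).erase v) v := by
  let R (v : α) : ℝ :=
    pinnedRatio (stageConstraints C x c j) (stagePins x c (j + 1) ∪ (c j).erase v) v
  have hXne (i : Fin m) : X i ≠ x :=
    ne_of_mem_erase (hXim ▸ mem_image_of_mem X (mem_univ i))
  have hRx : R x = 0 := by simp [R, pinnedRatio, RAO, stagePins]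
  calc ∑ i, RAO (aoSub C x c X j i) (aoPins x c X j i) (X i)
    _ = ∑ i, R (X i) :=
      sum_congr rfl fun i _ => RAO_aoSub_eq_pinnedRatio C x c X j i (hXne i)
    _ = ∑ v ∈ (c j).erase x, R v := by rw [← hXim, sum_image hXinj.injOn]
    _ = ∑ v ∈ c j, R v := sum_erase _ hRx

lemma stageCount_succ [Finite α] (hXinj : Function.Injective X)
    (hXim : image X univ = (c j).erase x) :
    (stageCount C x c (j + 1) : ℝ) = stageCount C x c j *
      (1 + ∑ i, RAO (aoSub C x c X j i) (aoPins x c X j i) (X i)) := by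
  rw [stageCount, stageConstraints_succ, pinnedCount_append_singleton, stagePins_succ_union,
    sum_RAO_aoSub_eq_sum_pinnedRatio C x c X j hXinj hXim, stageCount]

variable {C x c}

lemma aoSat_stageConstraints (hc : C.filter (fun cl => decide (x ∈ cl)) = List.ofFn c)
    (σ : α → Bool) : AOSat (stageConstraints C x c d) σ ↔ AOSat C σ := by
  rw [stageConstraints, List.take_of_length_le (by simp), ← hc]
  simp only [AOSat, List.mem_append, List.mem_filter]
  grind

lemma card_aoSat_and_true_eq_stageCount (hc : C.filter (fun cl => decide (x ∈ cl)) = List.ofFn c) :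
    Nat.card {σ : α → Bool // AOSat C σ ∧ σ x = true} = stageCount C x c d := by
  have hpins : stagePins x c d = {x} := by
    simp [stagePins, filter_false_of_mem fun (k : Fin d) _ => k.2.not_ge]
  simp [stageCount, pinnedCount, hpins, aoSat_stageConstraints hc]

lemma card_aoSat_and_false_eq_stageCount (hc : C.filter (fun cl => decide (x ∈ cl)) = List.ofFn c) :
    Nat.card {σ : α → Bool // AOSat C σ ∧ σ x = false} = stageCount C x c 0 := by
  have hmem : ∀ cl ∈ List.ofFn c, x ∈ cl := by simp [← hc]
  have hsat (σ : α → Bool) : AOSat C σ ↔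
      AOSat (C.filter (fun cl => decide (x ∉ cl)) ++ List.ofFn c) σ := by
    rw [← aoSat_stageConstraints hc, stageConstraints, List.take_of_length_le (by simp)]
  simp only [hsat]
  rw [card_aoSat_append_and_false (by simp) hmem, stageCount, pinnedCount]
  refine Nat.card_congr <| Equiv.subtypeEquivRight fun σ => ?_
  simp only [stageConstraints, stagePins, List.forall_mem_ofFn_iff, List.take_zero,
    List.append_nil, forall_mem_insert, mem_biUnion, mem_filter, mem_univ, true_and, zero_le]
  grind

end

theorem stmt11_general {α : Type*} [Finite α] [DecidableEq α] (C : List (Finset α)) (x : α)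
    {d : ℕ} (c : Fin d → Finset α)
    (hc : C.filter (fun cl => decide (x ∈ cl)) = List.ofFn c)
    {w : Fin d → ℕ} (X : (j : Fin d) → Fin (w j) → α) (hXinj : ∀ j, Function.Injective (X j))
    (hXim : ∀ j, image (X j) univ = (c j).erase x) :
    RAO C ∅ x = ∏ j : Fin d,
      1 / (1 + ∑ i : Fin (w j), RAO (aoSub C x c (X j) j i) (aoPins x c (X j) j i) (X j i)) := by
  have hpos (n : ℕ) : (stageCount C x c n : ℝ) ≠ 0 :=
    Nat.cast_ne_zero.2 (pinnedCount_pos _ _).ne'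
  have hfactor (j : Fin d) : (stageCount C x c j / stageCount C x c (j + 1) : ℝ) =
      1 / (1 + ∑ i, RAO (aoSub C x c (X j) j i) (aoPins x c (X j) j i) (X j i)) := by
    rw [stageCount_succ C x c (X j) j (hXinj j) (hXim j), div_mul_eq_div_div, div_self (hpos j)]
  have htelescope : ∏ n ∈ range d, (stageCount C x c n / stageCount C x c (n + 1) : ℝ) =
      stageCount C x c 0 / stageCount C x c d :=
    prod_range_induction _ (fun n => (stageCount C x c 0 / stageCount C x c n : ℝ))
      (div_self (hpos 0)) d fun n _ => (div_mul_div_cancel₀ (hpos n)).symm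
  rw [RAO, if_neg (notMem_empty x), card_aoSat_and_false_eq_stageCount hc,
    card_aoSat_and_true_eq_stageCount hc, ← htelescope, ← Fin.prod_univ_eq_prod_range]
  exact prod_congr rfl fun j _ => hfactor j

/-- recursion for the at-most-one CSP: let `C` be an at-most-one instance
with constraints of at most `4` distinct variables and every variable in at most `3`
constraints; let `x` occur in exactly the constraints `c_1,…,c_d` (`d ≥ 1`), with
`w_j = |c_j| − 1` and `x_{j,1},…,x_{j,w_j}` enumerating the variables of `c_j` other than
`x`.  Then `R(C,x) = ∏_j 1/(1 + Σ_i R(C_{j,i},x_{j,i}))`, where `R(C_{j,i},x_{j,i}) = 0`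
when `x_{j,i}` was pinned to `1` in forming `C_{j,i}` (and an empty product or inner sum
equals `1`, resp. `0`). -/
theorem stmt11 (C : List (Finset V))
    (hcard : ∀ cl ∈ C, cl.card ≤ 4)
    (hocc : ∀ v : V, (C.filter (fun cl => decide (v ∈ cl))).length ≤ 3)
    (x : V) (d : ℕ) (hd : 1 ≤ d) (c : Fin d → Finset V)
    (hc : C.filter (fun cl => decide (x ∈ cl)) = List.ofFn c)
    (w : Fin d → ℕ) (hw : ∀ j, w j + 1 = (c j).card)
    (X : (j : Fin d) → Fin (w j) → V) (hXinj : ∀ j, Function.Injective (X j))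
    (hXim : ∀ j, Finset.image (X j) Finset.univ = (c j).erase x) :
    RAO C ∅ x = ∏ j : Fin d,
      1 / (1 + ∑ i : Fin (w j), RAO (aoSub C x c (X j) j i) (aoPins x c (X j) j i) (X j i)) :=
  stmt11_general C x c hc X hXinj hXim
end

section
/- Let d ∈ {1,2} and let w_1,…,w_d be integers with 1 ≤ w_j ≤ 3. For all reals r_{j,i} ∈ [0,1] (1 ≤ j ≤ d, 1 ≤ i ≤ w_j), one has (1/√(1 + ∏_{k=1}^{d}(1 + Σ_{i=1}^{w_k} r_{k,i}))) · Σ_{j=1}^{d} [Σ_{i=1}^{w_j} √(r_{j,i}(1 + r_{j,i}))] / (1 + Σ_{i=1}^{w_j} r_{j,i}) < 0.99. -/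
open Finset

/-!
Let `x_j = 1 + ∑ i, r j i` and `u_j = 1 / x_j`. By Cauchy–Schwarz, the square of the `j`-th summand
is at most `g (u_j)`, where `g u = (1 - u) (1 + 2 u)`, and with at most two summands the square of
the whole sum is at most `2 ∑ j, g (u_j)`. It must be compared with `0.99² (1 + ∏ j, 1 / u_j)`.
A missing factor can be filled in with `u = 1`, because `g 1 = 0`; for two factors `u`, `v`, the
concavity of `g` and `u v ≤ ((u + v) / 2)²` reduce the comparison to the diagonal `u = v`, where it
is a quartic inequality in one variable.
-/

lemma sq_sum_sqrt_mul_one_add_le {ι : Type*} (s : Finset ι) {f : ι → ℝ} (hf : ∀ i ∈ s, 0 ≤ f i) :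
    (∑ i ∈ s, √(f i * (1 + f i))) ^ 2 ≤ (∑ i ∈ s, f i) * (#s + ∑ i ∈ s, f i) := by
  have hf' : ∀ i ∈ s, 0 ≤ 1 + f i := fun i hi => add_nonneg zero_le_one (hf i hi)
  calc (∑ i ∈ s, √(f i * (1 + f i))) ^ 2
      ≤ (∑ i ∈ s, f i) * ∑ i ∈ s, (1 + f i) :=
        sum_sq_le_sum_mul_sum_of_sq_le_mul s hf hf' fun i hi =>
          (Real.sq_sqrt (mul_nonneg (hf i hi) (hf' i hi))).le
    _ = (∑ i ∈ s, f i) * (#s + ∑ i ∈ s, f i) := by simp [sum_add_distrib]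

lemma sq_sum_sqrt_div_one_add_sum_le {ι : Type*} {s : Finset ι} {n : ℕ} (hn : #s ≤ n) {f : ι → ℝ}
    (hf : ∀ i ∈ s, 0 ≤ f i) :
    ((∑ i ∈ s, √(f i * (1 + f i))) / (1 + ∑ i ∈ s, f i)) ^ 2 ≤
      (1 - (1 + ∑ i ∈ s, f i)⁻¹) * (1 + (n - 1) * (1 + ∑ i ∈ s, f i)⁻¹) := by
  have hCS := sq_sum_sqrt_mul_one_add_le s hf
  have hS : 0 ≤ ∑ i ∈ s, f i := sum_nonneg hf
  generalize ∑ i ∈ s, f i = S at hCS hS ⊢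
  calc ((∑ i ∈ s, √(f i * (1 + f i))) / (1 + S)) ^ 2
      ≤ S * (n + S) / (1 + S) ^ 2 := by
        rw [div_pow]
        gcongr
        exact hCS.trans (by gcongr)
    _ = (1 - (1 + S)⁻¹) * (1 + (n - 1) * (1 + S)⁻¹) := by
        field_simp
        ring

lemma four_mul_one_sub_mul_one_add_mul_sq_lt (m : ℝ) :
    4 * ((1 - m) * (1 + 2 * m)) * m ^ 2 < 0.99 ^ 2 * (1 + m ^ 2) := by
  -- Completing the square twice: first in `m ^ 2`, leaving a positive quadratic in `m`.
  have hsos : 0.99 ^ 2 * (1 + m ^ 2) - 4 * ((1 - m) * (1 + 2 * m)) * m ^ 2 =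
      8 * (m ^ 2 - m / 4 - 0.26) ^ 2 + 0.64 * (m - 0.8125) ^ 2 + 0.0001 * m ^ 2 + 0.0168 := by
    ring
  rw [← sub_pos, hsos]
  positivity

lemma two_mul_add_lt_one_add_inv_mul_inv {u v : ℝ} (hu : 0 < u) (hv : 0 < v) :
    2 * ((1 - u) * (1 + 2 * u) + (1 - v) * (1 + 2 * v)) < 0.99 ^ 2 * (1 + u⁻¹ * v⁻¹) := by
  obtain ⟨m, hm⟩ : ∃ m, m = (u + v) / 2 := ⟨_, rfl⟩
  have hm0 : 0 < m := by rw [hm]; positivity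
  have hconcave : (1 - u) * (1 + 2 * u) + (1 - v) * (1 + 2 * v) ≤ 2 * ((1 - m) * (1 + 2 * m)) := by
    rw [hm]
    nlinarith [sq_nonneg (u - v)]
  have hAMGM : u * v ≤ m ^ 2 := by
    rw [hm]
    nlinarith [sq_nonneg (u - v)]
  calc 2 * ((1 - u) * (1 + 2 * u) + (1 - v) * (1 + 2 * v))
      ≤ 4 * ((1 - m) * (1 + 2 * m)) := by linarith
    _ < 0.99 ^ 2 * (1 + m ^ 2) / m ^ 2 :=
        (lt_div_iff₀ (by positivity)).2 (four_mul_one_sub_mul_one_add_mul_sq_lt m)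
    _ = 0.99 ^ 2 * (1 + (m ^ 2)⁻¹) := by
        field_simp
        ring
    _ ≤ 0.99 ^ 2 * (1 + u⁻¹ * v⁻¹) := by
        rw [← mul_inv]
        gcongr

lemma two_mul_sum_lt_one_add_prod_inv {ι : Type*} {s : Finset ι} (hs : #s ≤ 2) {u : ι → ℝ}
    (hu : ∀ j ∈ s, 0 < u j) :
    2 * ∑ j ∈ s, (1 - u j) * (1 + 2 * u j) < 0.99 ^ 2 * (1 + ∏ j ∈ s, (u j)⁻¹) := by
  classical
  obtain h | h | h : #s = 0 ∨ #s = 1 ∨ #s = 2 := by omega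
  · obtain rfl := card_eq_zero.1 h
    norm_num
  · obtain ⟨a, rfl⟩ := card_eq_one.1 h
    simpa using two_mul_add_lt_one_add_inv_mul_inv (hu a (by simp)) one_pos
  · obtain ⟨a, b, hab, rfl⟩ := card_eq_two.1 h
    simpa only [sum_pair hab, prod_pair hab] using
      two_mul_add_lt_one_add_inv_mul_inv (hu a (by simp)) (hu b (by simp))

lemma one_div_sqrt_mul_lt {P T c : ℝ} (hP : 0 < P) (hc : 0 ≤ c) (h : T ^ 2 < c ^ 2 * P) :
    1 / √P * T < c := by
  rw [one_div_mul_eq_div, div_lt_iff₀ (Real.sqrt_pos.2 hP)]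
  refine lt_of_pow_lt_pow_left₀ 2 (by positivity) ?_
  rwa [mul_pow, Real.sq_sqrt hP.le]

theorem stmt13_general {ι : Type*} [Fintype ι] (hι : Fintype.card ι ≤ 2) {κ : ι → Type*}
    [∀ j, Fintype (κ j)] (hκ : ∀ j, Fintype.card (κ j) ≤ 3) (r : ∀ j, κ j → ℝ)
    (hr : ∀ j i, 0 ≤ r j i) :
    1 / √(1 + ∏ k, (1 + ∑ i, r k i)) *
      ∑ j, (∑ i, √(r j i * (1 + r j i))) / (1 + ∑ i, r j i) < 0.99 := by
  have hx : ∀ j, 0 < 1 + ∑ i, r j i := fun j =>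
    add_pos_of_pos_of_nonneg one_pos (sum_nonneg fun i _ => hr j i)
  have hP : 0 < 1 + ∏ k, (1 + ∑ i, r k i) := add_pos one_pos (prod_pos fun k _ => hx k)
  refine one_div_sqrt_mul_lt hP (by norm_num) ?_
  calc (∑ j, (∑ i, √(r j i * (1 + r j i))) / (1 + ∑ i, r j i)) ^ 2
      ≤ Fintype.card ι * ∑ j, ((∑ i, √(r j i * (1 + r j i))) / (1 + ∑ i, r j i)) ^ 2 :=
        sq_sum_le_card_mul_sum_sq
    _ ≤ 2 * ∑ j, (1 - (1 + ∑ i, r j i)⁻¹) * (1 + 2 * (1 + ∑ i, r j i)⁻¹) := by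
        gcongr with j
        · exact_mod_cast hι
        · exact (sq_sum_sqrt_div_one_add_sum_le (hκ j) fun i _ => hr j i).trans_eq (by norm_num)
    _ < 0.99 ^ 2 * (1 + ∏ k, (1 + ∑ i, r k i)) := by
        simpa only [inv_inv] using
          two_mul_sum_lt_one_add_prod_inv hι fun j _ => inv_pos.2 (hx j)

/-- amortized decay condition for the at-most-one recursion: for `d ∈ {1,2}`,
`1 ≤ w_j ≤ 3` and `r_{j,i} ∈ [0,1]`,
`(1/√(1 + ∏_k (1 + Σ_i r_{k,i}))) · Σ_j (Σ_i √(r_{j,i}(1+r_{j,i})))/(1 + Σ_i r_{j,i}) < 0.99`. -/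
theorem stmt13 (d : ℕ) (hd : d = 1 ∨ d = 2) (w : Fin d → ℕ) (hw : ∀ j, 1 ≤ w j ∧ w j ≤ 3)
    (r : (j : Fin d) → Fin (w j) → ℝ) (hr : ∀ j i, r j i ∈ Set.Icc (0 : ℝ) 1) :
    (1 / Real.sqrt (1 + ∏ k, (1 + ∑ i, r k i))) *
      ∑ j, (∑ i, Real.sqrt (r j i * (1 + r j i))) / (1 + ∑ i, r j i) < 0.99 :=
  stmt13_general (by rw [Fintype.card_fin]; omega)
    (fun j => by simpa only [Fintype.card_fin] using (hw j).2) r fun j i => (hr j i).1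
end

section
/- Let d ≥ 1 and let w_1,…,w_d ≥ 1 be integers. For all reals r'_{j,i} ∈ [0,1] (1 ≤ j ≤ d, 1 ≤ i ≤ w_j), setting r_j = (1/w_j)·Σ_{i=1}^{w_j} r'_{j,i}, one has (1/√(1 + ∏_{k=1}^{d}(1 + Σ_{i=1}^{w_k} r'_{k,i}))) · Σ_{j=1}^{d} [Σ_{i=1}^{w_j} √(r'_{j,i}(1 + r'_{j,i}))] / (1 + Σ_{i=1}^{w_j} r'_{j,i}) ≤ κ_d^{(w_1,…,w_d)}(r). -/
open Finset

/-- The single-layer decay rate for the at-most-one recursion: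
`κ_d^{(w_1,…,w_d)}(r) = (1/√(1 + ∏_k (1 + w_k r_k))) · Σ_j w_j √(r_j(1+r_j))/(1 + w_j r_j)`. -/
noncomputable def kapAO (d : ℕ) (w : Fin d → ℕ) (r : Fin d → ℝ) : ℝ :=
  (1 / Real.sqrt (1 + ∏ k, (1 + (w k : ℝ) * r k))) *
    ∑ j, (w j : ℝ) * Real.sqrt (r j * (1 + r j)) / (1 + (w j : ℝ) * r j)

/-! On `[0, ∞)` the function `x ↦ √(x (1 + x))` is the geometric mean of two nonnegative affine
functions, hence concave. Replacing each `r' j i` by the average `r j` of its group preserves the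
group sums, and with them every denominator, while Jensen's inequality says that it can only
increase the numerators. -/

theorem sqrt_mul_add_sqrt_mul_le {a b c d : ℝ} (ha : 0 ≤ a) (hb : 0 ≤ b) (hc : 0 ≤ c)
    (hd : 0 ≤ d) : √(a * b) + √(c * d) ≤ √((a + c) * (b + d)) := by
  have cauchy_schwarz := Real.sum_sqrt_mul_sqrt_le univ (f := ![a, c]) (g := ![b, d])
    (by simp [Fin.forall_fin_two, ha, hc]) (by simp [Fin.forall_fin_two, hb, hd])
  simpa [Fin.sum_univ_two, Real.sqrt_mul, ha, hc, add_nonneg] using cauchy_schwarz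

theorem concaveOn_sqrt_mul {E : Type*} [AddCommMonoid E] [Module ℝ E] {s : Set E} {f g : E → ℝ}
    (hf : ConcaveOn ℝ s f) (hg : ConcaveOn ℝ s g) (hf₀ : ∀ x ∈ s, 0 ≤ f x)
    (hg₀ : ∀ x ∈ s, 0 ≤ g x) : ConcaveOn ℝ s fun x => √(f x * g x) := by
  refine ⟨hf.1, fun x hx y hy a b ha hb hab => ?_⟩
  have sqrt_smul {t u v : ℝ} (ht : 0 ≤ t) : t • √(u * v) = √(t • u * t • v) := by
    rw [smul_mul_smul_comm, smul_eq_mul, smul_eq_mul, Real.sqrt_mul (mul_self_nonneg t),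
      Real.sqrt_mul_self ht]
  have hfx : 0 ≤ a • f x := smul_nonneg ha (hf₀ x hx)
  have hfy : 0 ≤ b • f y := smul_nonneg hb (hf₀ y hy)
  have hgx : 0 ≤ a • g x := smul_nonneg ha (hg₀ x hx)
  have hgy : 0 ≤ b • g y := smul_nonneg hb (hg₀ y hy)
  calc a • √(f x * g x) + b • √(f y * g y)
      = √(a • f x * a • g x) + √(b • f y * b • g y) := by rw [sqrt_smul ha, sqrt_smul hb]
    _ ≤ √((a • f x + b • f y) * (a • g x + b • g y)) :=
        sqrt_mul_add_sqrt_mul_le hfx hgx hfy hgy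
    _ ≤ √(f (a • x + b • y) * g (a • x + b • y)) :=
        Real.sqrt_le_sqrt <| mul_le_mul (hf.2 hx hy ha hb hab) (hg.2 hx hy ha hb hab)
          (add_nonneg hgx hgy) (hf₀ _ (hf.1 hx hy ha hb hab))

theorem concaveOn_sqrt_mul_one_add : ConcaveOn ℝ (Set.Ici 0) fun x : ℝ => √(x * (1 + x)) :=
  have hid : ConcaveOn ℝ (Set.Ici (0 : ℝ)) fun x => x := concaveOn_id (convex_Ici 0)
  have hone_add : ConcaveOn ℝ (Set.Ici (0 : ℝ)) fun x => 1 + x :=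
    (concaveOn_const 1 (convex_Ici 0)).add hid
  concaveOn_sqrt_mul hid hone_add (fun _ hx => hx) fun _ hx => add_nonneg zero_le_one hx

theorem sum_map_le_card_mul_map_average {ι E : Type*} [Fintype ι] [Nonempty ι] [AddCommGroup E]
    [Module ℝ E] {s : Set E} {f : E → ℝ} (hf : ConcaveOn ℝ s f) {x : ι → E} (hx : ∀ i, x i ∈ s) :
    ∑ i, f (x i) ≤ Fintype.card ι * f ((1 / (Fintype.card ι : ℝ)) • ∑ i, x i) := by
  have card_pos : (0 : ℝ) < Fintype.card ι := Nat.cast_pos.2 Fintype.card_pos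
  have jensen := hf.le_map_sum (t := univ) (w := fun _ => 1 / (Fintype.card ι : ℝ))
    (fun _ _ => by positivity) (by simp) fun i _ => hx i
  rwa [← smul_sum, ← smul_sum, smul_eq_mul, one_div_mul_eq_div, div_le_iff₀' card_pos] at jensen

theorem stmt14_general (d : ℕ) (w : Fin d → ℕ) (hw : ∀ j, 1 ≤ w j)
    (r' : (j : Fin d) → Fin (w j) → ℝ) (hr' : ∀ j i, 0 ≤ r' j i) :
    (1 / √(1 + ∏ k, (1 + ∑ i, r' k i))) *
      ∑ j, (∑ i, √(r' j i * (1 + r' j i))) / (1 + ∑ i, r' j i) ≤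
    kapAO d w (fun j => (1 / (w j : ℝ)) * ∑ i, r' j i) := by
  have group_sum (j : Fin d) : (w j : ℝ) * (1 / (w j : ℝ) * ∑ i, r' j i) = ∑ i, r' j i := by
    rw [← mul_assoc, mul_one_div_cancel (Nat.cast_ne_zero.2 (Nat.ne_of_gt (hw j))), one_mul]
  have numerator_le (j : Fin d) : ∑ i, √(r' j i * (1 + r' j i)) ≤
      w j * √((1 / (w j : ℝ) * ∑ i, r' j i) * (1 + 1 / (w j : ℝ) * ∑ i, r' j i)) := by
    have : Nonempty (Fin (w j)) := ⟨⟨0, hw j⟩⟩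
    simpa only [Fintype.card_fin, smul_eq_mul] using
      sum_map_le_card_mul_map_average concaveOn_sqrt_mul_one_add (hr' j)
  have denominator_nonneg (j : Fin d) : 0 ≤ 1 + ∑ i, r' j i :=
    add_nonneg zero_le_one (sum_nonneg fun i _ => hr' j i)
  simp only [kapAO, group_sum]
  gcongr with j
  exacts [denominator_nonneg j, numerator_le j]

/-- replacing each group by its average only increases the two-layer rate:
with `r_j = (1/w_j)·Σ_i r'_{j,i}`, the two-layer expression is at most `κ_d^{(w)}(r)`. -/
theorem stmt14 (d : ℕ) (hd : 1 ≤ d) (w : Fin d → ℕ) (hw : ∀ j, 1 ≤ w j)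
    (r' : (j : Fin d) → Fin (w j) → ℝ) (hr' : ∀ j i, r' j i ∈ Set.Icc (0 : ℝ) 1) :
    (1 / Real.sqrt (1 + ∏ k, (1 + ∑ i, r' k i))) *
      ∑ j, (∑ i, Real.sqrt (r' j i * (1 + r' j i))) / (1 + ∑ i, r' j i) ≤
    kapAO d w (fun j => (1 / (w j : ℝ)) * ∑ i, r' j i) := by
  exact stmt14_general d w hw r' fun j i => (hr' j i).1
end

section
/- For every r ∈ [0,1]: κ_1^{(1)}(r) < 0.41, κ_1^{(2)}(r) ≤ 0.5, and κ_1^{(3)}(r) < 0.58, where κ_1^{(w)}(r) = w√(r(1+r)) / ((1 + w r)·√(2 + w r)). -/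
/-!
For `r ≥ 0` the square of `κ_1^{(w)}(r)` is a rational function of `r`, so a bound `κ² ≤ c` is a
polynomial inequality. For `w = 1` a factor `1 + r` cancels and `c = 1/6`, the value at `r = 1`,
leaves `(1 - r)(2 - r) ≥ 0`. For `w = 2` the same factor cancels and `c = 1/4`, the value at
`r = 1/2`, leaves `(1 - 2r)² ≥ 0`. For `w = 3` the maximum is at an irrational point near `2/7`, and
`c = 42/125`, just below `0.58²`, leaves a cubic that dominates a positive multiple of `(7r - 2)²`.
-/

/-- `κ_1^{(w)}(r) = w√(r(1+r)) / ((1 + w r)·√(2 + w r))`. -/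
noncomputable def kapAO1 (w : ℕ) (r : ℝ) : ℝ :=
  (w : ℝ) * Real.sqrt (r * (1 + r)) / ((1 + (w : ℝ) * r) * Real.sqrt (2 + (w : ℝ) * r))

section

variable {r : ℝ}

lemma kapAO1_sq (w : ℕ) (hr : 0 ≤ r) :
    kapAO1 w r ^ 2 = w ^ 2 * (r * (1 + r)) / ((1 + w * r) ^ 2 * (2 + w * r)) := by
  rw [kapAO1, div_pow, mul_pow, mul_pow, Real.sq_sqrt (by positivity),
    Real.sq_sqrt (by positivity)]

lemma kapAO1_sq_le_iff (w : ℕ) (hr : 0 ≤ r) {c : ℝ} :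
    kapAO1 w r ^ 2 ≤ c ↔ w ^ 2 * (r * (1 + r)) ≤ c * ((1 + w * r) ^ 2 * (2 + w * r)) := by
  rw [kapAO1_sq w hr, div_le_iff₀ (by positivity)]

lemma kapAO1_one_sq_le (hr₀ : 0 ≤ r) (hr₁ : r ≤ 1) : kapAO1 1 r ^ 2 ≤ 1 / 6 := by
  rw [kapAO1_sq_le_iff 1 hr₀, Nat.cast_one]
  have hquad : 0 ≤ (1 - r) * (2 - r) := mul_nonneg (by linarith) (by linarith)
  linear_combination (1 + r) / 6 * hquad

lemma kapAO1_two_sq_le (hr : 0 ≤ r) : kapAO1 2 r ^ 2 ≤ 1 / 4 := by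
  rw [kapAO1_sq_le_iff 2 hr, Nat.cast_ofNat]
  linear_combination (1 + r) / 2 * sq_nonneg (1 - 2 * r)

lemma kapAO1_three_sq_le (hr : 0 ≤ r) : kapAO1 3 r ^ 2 ≤ 42 / 125 := by
  rw [kapAO1_sq_le_iff 3 hr, Nat.cast_ofNat]
  have hcubic : 0 ≤ 378 * r ^ 3 + 129 * r ^ 2 - 165 * r + 28 := by
    calc
      0 ≤ 7 * (7 * r - 2) ^ 2 * (1.1 * r + 1) + (0.7 * r ^ 3 + 1.6 * r ^ 2 + 0.2 * r) := by
        positivity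
      _ = 378 * r ^ 3 + 129 * r ^ 2 - 165 * r + 28 := by ring
  linear_combination 3 / 125 * hcubic

end

/-- for `r ∈ [0,1]`, `κ_1^{(1)}(r) < 0.41`, `κ_1^{(2)}(r) ≤ 0.5`,
and `κ_1^{(3)}(r) < 0.58`. -/
theorem stmt17 (r : ℝ) (hr : r ∈ Set.Icc (0 : ℝ) 1) :
    kapAO1 1 r < 0.41 ∧ kapAO1 2 r ≤ 0.5 ∧ kapAO1 3 r < 0.58 := by
  obtain ⟨hr₀, hr₁⟩ := hr
  refine ⟨lt_of_pow_lt_pow_left₀ 2 (by norm_num) ?_, le_of_sq_le_sq ?_ (by norm_num),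
    lt_of_pow_lt_pow_left₀ 2 (by norm_num) ?_⟩
  · exact (kapAO1_one_sq_le hr₀ hr₁).trans_lt (by norm_num)
  · exact (kapAO1_two_sq_le hr₀).trans (by norm_num)
  · exact (kapAO1_three_sq_le hr₀).trans_lt (by norm_num)
end
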